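/- arXiv:1708.01598 — 13 statements merged into one kernel-verified Lean document; each statement's English description precedes it below -/
import Mathlib

section
/- Let X be a strictly convex real normed space and f a motion of X. If there exists x ∈ X with ‖f(x)‖ ≤ ‖x‖ and ‖f(−x)‖ ≤ ‖x‖, then f(θ) = θ, i.e. the shift component of f is trivial. -/
/-- Let `X` be a strictly convex real normed space and `f` a motion of `X`.
If there exists `x` with `‖f x‖ ≤ ‖x‖` and `‖f (-x)‖ ≤ ‖x‖`, then `f θ = θ`. -/
theorem motion_trivial_shift
    {X : Type*} [NormedAddCommGroup X] [NormedSpace ℝ X]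
    (hNCS : ∀ x y : X, x ≠ y → ‖x‖ = 1 → ‖y‖ = 1 →
      ∀ l : ℝ, 0 < l → l < 1 → ‖l • x + (1 - l) • y‖ < 1)
    (f : X → X) (hf_surj : Function.Surjective f)
    (hf_iso : ∀ x y : X, ‖f x - f y‖ = ‖x - y‖)
    (x : X) (h1 : ‖f x‖ ≤ ‖x‖) (h2 : ‖f (-x)‖ ≤ ‖x‖) :
    f 0 = 0 := by
  have key : ∀ (r : ℝ) (u v : X), 0 < r → ‖u‖ = r → ‖v‖ = r → ‖u + v‖ = 2 * r → u = v := by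
    intro r u v hr hu hv huv
    by_contra hne
    have hr' : r⁻¹ ≠ 0 := inv_ne_zero hr.ne'
    have h := hNCS (r⁻¹ • u) (r⁻¹ • v) (fun h => hne (smul_right_injective X hr' h))
      (by rw [norm_smul, hu, Real.norm_of_nonneg (by positivity)]; field_simp)
      (by rw [norm_smul, hv, Real.norm_of_nonneg (by positivity)]; field_simp)
      (1 / 2) (by norm_num) (by norm_num)
    have e : (1 / 2 : ℝ) • r⁻¹ • u + (1 - 1 / 2 : ℝ) • r⁻¹ • v = ((1 / 2) * r⁻¹) • (u + v) := by
      module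
    rw [e, norm_smul, huv, Real.norm_of_nonneg (by positivity)] at h
    have e2 : 1 / 2 * r⁻¹ * (2 * r) = 1 := by field_simp
    linarith
  rcases eq_or_ne x 0 with rfl | hx
  · simpa using h1
  have hr : 0 < ‖x‖ := norm_pos_iff.mpr hx
  have two : ∀ w : X, ‖w + w‖ = 2 * ‖w‖ := by
    intro w
    rw [← two_smul ℝ w, norm_smul]; norm_num
  have hab : ‖f x + -f (-x)‖ = 2 * ‖x‖ := by
    rw [← sub_eq_add_neg, hf_iso, sub_neg_eq_add, two]
  have htri := norm_add_le (f x) (-f (-x))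
  rw [hab, norm_neg] at htri
  have ha : ‖f x‖ = ‖x‖ := by linarith
  have hb : ‖f (-x)‖ = ‖x‖ := by linarith
  have hE := key _ _ _ hr ha (by rw [norm_neg, hb]) hab
  have hc1 : ‖f x - f 0‖ = ‖x‖ := by rw [hf_iso, sub_zero]
  have hc2 : ‖f x + f 0‖ = ‖x‖ := by
    have := hf_iso 0 (-x)
    rw [zero_sub, neg_neg] at this
    rw [← this, hE]
    congr 1
    abel
  have h := key _ _ _ hr hc1 hc2 (by
    rw [show f x - f 0 + (f x + f 0) = f x + f x by abel, two, ha])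
  have h3 : (2 : ℝ) • f 0 = (f x + f 0) - (f x - f 0) := by module
  rw [h, sub_self] at h3
  exact (smul_eq_zero.mp h3).resolve_left two_ne_zero
end

section
/- Let X be a real normed space containing m linearly independent vectors (m ∈ ℕ, m ≥ 1), and let r > 0. If the sphere S(θ,r) = {x ∈ X : ‖x‖ = r} is the union of m closed sets A₁, …, A_m, then there exist an index i₀ and a point x with ‖x‖ = r such that both x and −x belong to A_{i₀}. -/
namespace LSB

/-- mod 2 chains of ordered simplices (lists of points) -/
abbrev Ch (X : Type*) := List X →₀ ZMod 2

section
variable {X : Type*}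

lemma ch_add_self (c : Ch X) : c + c = 0 := by
  ext l; simp [CharTwo.add_self_eq_zero]

noncomputable def dL (l : List X) : Ch X := ∑ i : Fin l.length, Finsupp.single (l.eraseIdx i) 1

noncomputable def ext {M : Type*} [AddCommGroup M] [Module (ZMod 2) M] (f : List X → M) :
    Ch X →ₗ[ZMod 2] M := Finsupp.linearCombination (ZMod 2) f

@[simp] lemma ext_single {M : Type*} [AddCommGroup M] [Module (ZMod 2) M] (f : List X → M)
    (l : List X) : ext f (Finsupp.single l 1) = f l := by simp [ext]

noncomputable def d : Ch X →ₗ[ZMod 2] Ch X := ext dL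

noncomputable def cone (b : X) : Ch X →ₗ[ZMod 2] Ch X := ext fun l => Finsupp.single (b :: l) 1

lemma hom_ext {M : Type*} [AddCommGroup M] [Module (ZMod 2) M] {f g : Ch X →ₗ[ZMod 2] M}
    (h : ∀ l, f (Finsupp.single l 1) = g (Finsupp.single l 1)) : f = g := by
  apply Finsupp.lhom_ext'
  intro l
  apply LinearMap.ext_ring
  simpa using h l

lemma dL_cons (b : X) (l : List X) : dL (b :: l) = Finsupp.single l 1 + cone b (dL l) := by
  unfold dL
  simp only [List.length_cons, map_sum]
  rw [Fin.sum_univ_succ]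
  simp [cone]

lemma d_cone (b : X) (c : Ch X) : d (cone b c) = c + cone b (d c) := by
  have : d ∘ₗ cone b = LinearMap.id + cone b ∘ₗ d := by
    apply hom_ext
    intro l
    simp [d, cone, dL_cons]
  simpa using LinearMap.congr_fun this c

lemma d_nil : d (Finsupp.single ([] : List X) 1) = 0 := by simp [d, dL]

lemma d_d (c : Ch X) : d (d c) = 0 := by
  have : d ∘ₗ d = (0 : Ch X →ₗ[ZMod 2] Ch X) := by
    apply hom_ext
    intro l
    induction l with
    | nil => simp [d_nil]
    | cons b l ih =>
      have h : Finsupp.single (b :: l) (1 : ZMod 2) = cone b (Finsupp.single l 1) := by simp [cone]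
      simp only [LinearMap.comp_apply, LinearMap.zero_apply] at ih ⊢
      rw [h, d_cone, map_add, d_cone, ih, map_zero, add_zero, ch_add_self]
  simpa using LinearMap.congr_fun this c

/-- pushforward -/
noncomputable def mp (f : X → X) : Ch X →ₗ[ZMod 2] Ch X :=
  ext fun l => Finsupp.single (l.map f) 1

lemma mp_cone (f : X → X) (b : X) (c : Ch X) : mp f (cone b c) = cone (f b) (mp f c) := by
  have : mp f ∘ₗ cone b = cone (f b) ∘ₗ mp f := by
    apply hom_ext; intro l; simp [mp, cone]
  simpa using LinearMap.congr_fun this c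

lemma mp_d (f : X → X) (c : Ch X) : mp f (d c) = d (mp f c) := by
  have : mp f ∘ₗ d = d ∘ₗ mp f := by
    apply hom_ext; intro l
    induction l with
    | nil => simp [mp, d_nil]
    | cons b l ih =>
      have h : Finsupp.single (b :: l) (1 : ZMod 2) = cone b (Finsupp.single l 1) := by simp [cone]
      simp only [LinearMap.comp_apply] at ih ⊢
      rw [h, d_cone, mp_cone, d_cone, map_add, mp_cone, ih]
  simpa using LinearMap.congr_fun this c

/-- a chain all of whose lists satisfy p -/
def Sup (p : List X → Prop) (c : Ch X) : Prop := c ∈ Finsupp.supported (ZMod 2) (ZMod 2) {l | p l}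

lemma Sup.ext {p q : List X → Prop} {f : List X → Ch X} (h : ∀ l, p l → Sup q (f l))
    {c : Ch X} (hc : Sup p c) : Sup q (ext f c) := by
  unfold LSB.ext
  rw [Finsupp.linearCombination_apply]
  refine Submodule.sum_mem _ fun l hl => Submodule.smul_mem _ _ (h l ?_)
  exact hc hl

lemma Sup.single {p : List X → Prop} {l : List X} (h : p l) : Sup p (Finsupp.single l 1) :=
  Finsupp.single_mem_supported _ _ h

lemma Sup.mono {p q : List X → Prop} (h : ∀ l, p l → q l) {c : Ch X} (hc : Sup p c) : Sup q c :=
  fun _ hl => h _ (hc hl)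

lemma Sup.cone {p q : List X → Prop} (b : X) (h : ∀ l, p l → q (b :: l))
    {c : Ch X} (hc : Sup p c) : Sup q (cone b c) :=
  Sup.ext (fun l hl => Sup.single (h l hl)) hc

lemma Sup.mp {p q : List X → Prop} (f : X → X) (h : ∀ l, p l → q (l.map f))
    {c : Ch X} (hc : Sup p c) : Sup q (mp f c) :=
  Sup.ext (fun l hl => Sup.single (h l hl)) hc

lemma Sup.add {p : List X → Prop} {c c' : Ch X} (hc : Sup p c) (hc' : Sup p c') :
    Sup p (c + c') := Submodule.add_mem _ hc hc'

lemma Sup.sum {ι : Type*} (s : Finset ι) {p : List X → Prop} {c : ι → Ch X}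
    (hc : ∀ i ∈ s, Sup p (c i)) : Sup p (∑ i ∈ s, c i) := Submodule.sum_mem _ hc

/-! cochains -/

def coA : (ℕ → X → ZMod 2) → List X → ZMod 2
  | _, [] => 1
  | e, [v] => e 0 v
  | e, u :: v :: t => (e 0 u + e 0 v) * coA (fun n => e (n + 1)) (v :: t)

def coB : (ℕ → X → ZMod 2) → List X → ZMod 2
  | _, [] => 0
  | _, [_] => 1
  | e, u :: v :: t => (e 0 u + e 0 v) * coB (fun n => e (n + 1)) (v :: t)

lemma coA_pair (e : ℕ → X → ZMod 2) (u v : X) (t : List X) :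
    coA e (v :: t) + coA e (u :: t) = (e 0 u + e 0 v) * coA (fun n => e (n + 1)) t := by
  cases t with
  | nil => simp [coA, add_comm]
  | cons x t =>
    simp only [coA]
    have := CharTwo.add_self_eq_zero (e 0 x)
    linear_combination this * coA (fun n => e (n + 1)) (x :: t)

lemma coA_d_list (e : ℕ → X → ZMod 2) (l : List X) :
    ∑ i : Fin l.length, coA e (l.eraseIdx i) = coB e l := by
  induction l generalizing e with
  | nil => simp [coB]
  | cons u l ih =>
    cases l with
    | nil => simp [coA, coB]
    | cons v t =>
      have h := ih (fun n => e (n + 1))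
      have hp := coA_pair e u v t
      simp only [List.length_cons] at h ⊢
      rw [Fin.sum_univ_succ] at h
      rw [Fin.sum_univ_succ, Fin.sum_univ_succ]
      simp only [Fin.val_zero, Fin.val_succ, List.eraseIdx_cons_zero, List.eraseIdx_cons_succ,
        coA, coB, ← Finset.mul_sum] at h ⊢
      rw [← h, ← add_assoc, hp]
      have := CharTwo.add_self_eq_zero (coA (fun n => e (n + 1)) t)
      ring

lemma coA_d (e : ℕ → X → ZMod 2) (c : Ch X) : ext (coA e) (d c) = ext (coB e) c := by
  have : ext (coA e) ∘ₗ d = ext (coB e) := by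
    apply hom_ext; intro l
    simp [d, dL, coA_d_list]
  simpa using LinearMap.congr_fun this c

lemma coA_mp_list (e : ℕ → X → ZMod 2) (f : X → X) (l : List X)
    (h : ∀ n, ∀ x ∈ l, e n (f x) = e n x + 1) :
    coA e l + coA e (l.map f) = coB e l := by
  induction l generalizing e with
  | nil => simp [coA, coB]; exact CharTwo.add_self_eq_zero _
  | cons u l ih =>
    cases l with
    | nil =>
      have := h 0 u (by simp)
      simp [coA, coB, this]
      linear_combination CharTwo.add_self_eq_zero (e 0 u)
    | cons v t =>
      have h' := ih (fun n => e (n + 1)) (fun n x hx => h (n + 1) x (by simp [hx]))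
      simp only [coA, coB, List.map_cons] at h' ⊢
      rw [h 0 u (by simp), h 0 v (by simp), ← h']
      linear_combination CharTwo.add_self_eq_zero (1 : ZMod 2) * coA (fun n => e (n + 1)) (f v :: t.map f)

lemma eval_congr {p : List X → Prop} {f g : List X → ZMod 2} (h : ∀ l, p l → f l = g l)
    {c : Ch X} (hc : Sup p c) : ext f c = ext g c := by
  unfold LSB.ext
  rw [Finsupp.linearCombination_apply, Finsupp.linearCombination_apply]
  refine Finsupp.sum_congr fun l hl => ?_
  rw [h l (hc hl)]

lemma coA_mp (e : ℕ → X → ZMod 2) (f : X → X) (c : Ch X)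
    (hc : Sup (fun l => ∀ n, ∀ x ∈ l, e n (f x) = e n x + 1) c) :
    ext (coA e) (c + mp f c) = ext (coB e) c := by
  have h1 : ext (coA e) (c + mp f c) = ext (fun l => coA e l + coA e (l.map f)) c := by
    have : ext (coA e) ∘ₗ (LinearMap.id + mp f) = ext (fun l => coA e l + coA e (l.map f)) := by
      apply hom_ext; intro l; simp [mp]
    simpa using LinearMap.congr_fun this c
  rw [h1]
  exact eval_congr (fun l hl => coA_mp_list e f l hl) hc

lemma coB_zero (e : ℕ → X → ZMod 2) (l : List X) (j : ℕ) (hj : j + 1 < l.length) (a : ZMod 2)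
    (h : ∀ x ∈ l, e j x = a) : coB e l = 0 := by
  induction l generalizing e j with
  | nil => simp at hj
  | cons u l ih =>
    cases l with
    | nil => simp at hj
    | cons v t =>
      simp only [coB]
      cases j with
      | zero => rw [h u (by simp), h v (by simp), CharTwo.add_self_eq_zero, zero_mul]
      | succ j =>
        rw [ih (fun n => e (n + 1)) j (by simpa using hj) (fun x hx => h x (by simp [hx])), mul_zero]

end

section
variable {X : Type*} [NormedAddCommGroup X] [NormedSpace ℝ X]

noncomputable def bary (l : List X) : X := (l.length : ℝ)⁻¹ • l.sum

noncomputable def sdL (l : List X) : Ch X :=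
  if l = [] then Finsupp.single [] 1
  else cone (bary l) (∑ i : Fin l.length, sdL (l.eraseIdx i))
termination_by l.length
decreasing_by
  have := i.2
  rw [List.length_eraseIdx_of_lt this]
  omega

noncomputable def sd : Ch X →ₗ[ZMod 2] Ch X := ext sdL

lemma sd_nil : sd (Finsupp.single ([] : List X) 1) = Finsupp.single [] 1 := by
  simp [sd]; rw [sdL]; simp

lemma sd_single {l : List X} (h : l ≠ []) :
    sd (Finsupp.single l 1) = cone (bary l) (sd (d (Finsupp.single l 1))) := by
  simp only [sd, ext_single, d, dL, map_sum]
  rw [sdL, if_neg h, map_sum]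

lemma sd_d (c : Ch X) : d (sd c) = sd (d c) := by
  suffices H : ∀ n, ∀ l : List X, l.length = n →
      d (sd (Finsupp.single l 1)) = sd (d (Finsupp.single l 1)) by
    have : d ∘ₗ sd = sd ∘ₗ (d : Ch X →ₗ[ZMod 2] Ch X) := by
      apply hom_ext; intro l; exact H _ l rfl
    simpa using LinearMap.congr_fun this c
  intro n
  induction n with
  | zero =>
    intro l hl
    obtain rfl := List.length_eq_zero_iff.1 hl
    simp [sd_nil, d_nil]
  | succ n ih =>
    intro l hl
    have hne : l ≠ [] := by rintro rfl; simp at hl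
    rw [sd_single hne, d_cone]
    have : d (sd (d (Finsupp.single l 1))) = sd (d (d (Finsupp.single l 1))) := by
      have e : d (Finsupp.single l 1) = ∑ i : Fin l.length, Finsupp.single (l.eraseIdx i) 1 := by
        simp [d, dL]
      rw [e]
      simp only [map_sum]
      refine Finset.sum_congr rfl fun i _ => ih _ ?_
      rw [List.length_eraseIdx_of_lt i.2]; omega
    rw [this, d_d, map_zero, map_zero, add_zero]

lemma bary_neg (l : List X) : bary (l.map Neg.neg) = - bary l := by
  have : (l.map Neg.neg).sum = - l.sum := by
    induction l with
    | nil => simp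
    | cons a l ih => simp only [List.map_cons, List.sum_cons, ih, neg_add]
  simp only [bary, List.length_map, this, smul_neg]

lemma sd_mp (c : Ch X) : mp Neg.neg (sd c) = sd (mp Neg.neg c) := by
  suffices H : ∀ n, ∀ l : List X, l.length = n →
      mp Neg.neg (sd (Finsupp.single l 1)) = sd (mp Neg.neg (Finsupp.single l 1)) by
    have : mp Neg.neg ∘ₗ sd = sd ∘ₗ (mp Neg.neg : Ch X →ₗ[ZMod 2] Ch X) := by
      apply hom_ext; intro l; exact H _ l rfl
    simpa using LinearMap.congr_fun this c
  intro n
  induction n with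
  | zero =>
    intro l hl
    obtain rfl := List.length_eq_zero_iff.1 hl
    simp [sd_nil, mp]
  | succ n ih =>
    intro l hl
    have hne : l ≠ [] := by rintro rfl; simp at hl
    have hm : mp Neg.neg (Finsupp.single l 1) = Finsupp.single (l.map Neg.neg) 1 := by simp [mp]
    have hne' : l.map Neg.neg ≠ [] := by simpa using hne
    rw [hm, sd_single hne, sd_single hne', mp_cone, bary_neg, ← hm, ← mp_d]
    congr 1
    have e : d (Finsupp.single l 1) = ∑ i : Fin l.length, Finsupp.single (l.eraseIdx i) 1 := by
      simp [d, dL]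
    rw [e]
    simp only [map_sum]
    refine Finset.sum_congr rfl fun i _ => ih _ ?_
    rw [List.length_eraseIdx_of_lt i.2]; omega

lemma bary_mem {K : Set X} (hK : Convex ℝ K) {l : List X} (hne : l ≠ []) (h : ∀ x ∈ l, x ∈ K) :
    bary l ∈ K := by
  have hlen : 0 < l.length := List.length_pos_iff.2 hne
  have : bary l = ∑ i : Fin l.length, (l.length : ℝ)⁻¹ • l[i] := by
    rw [← Finset.smul_sum, bary]; congr 1
    simp
  rw [this]
  apply hK.sum_mem
  · intros; positivity
  · simp; field_simp
  · intro i _; exact h _ (List.getElem_mem _)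

lemma dist_bary {l : List X} {D : ℝ} (h : ∀ x ∈ l, ∀ y ∈ l, dist x y ≤ D) {v : X} (hv : v ∈ l)  :
    dist v (bary l) ≤ (1 - (l.length : ℝ)⁻¹) * D := by
  have hne : l ≠ [] := List.ne_nil_of_mem hv
  have hlen : 0 < l.length := List.length_pos_iff.2 hne
  obtain ⟨j, hj, rfl⟩ := List.getElem_of_mem hv
  have hb : bary l = ∑ i : Fin l.length, (l.length : ℝ)⁻¹ • l[i] := by
    rw [← Finset.smul_sum, bary]; congr 1
    simp
  have : l[j] - bary l = ∑ i : Fin l.length, (l.length : ℝ)⁻¹ • (l[j] - l[i]) := by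
    simp only [smul_sub, Finset.sum_sub_distrib, hb]
    congr 1
    simp
    rw [← Nat.cast_smul_eq_nsmul ℝ, smul_smul, mul_inv_cancel₀ (by positivity), one_smul]
  rw [dist_eq_norm, this, ← Finset.add_sum_erase _ _ (Finset.mem_univ (⟨j, hj⟩ : Fin l.length))]
  simp only [Fin.getElem_fin, sub_self, smul_zero, zero_add]
  refine (norm_sum_le _ _).trans ?_
  have : ∀ i ∈ Finset.univ.erase (⟨j, hj⟩ : Fin l.length),
      ‖(l.length : ℝ)⁻¹ • (l[j] - l[i.1])‖ ≤ (l.length : ℝ)⁻¹ * D := by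
    intro i _
    rw [norm_smul, norm_inv, Real.norm_natCast, ← dist_eq_norm]
    gcongr
    exact h _ (List.getElem_mem _) _ (List.getElem_mem _)
  refine (Finset.sum_le_card_nsmul _ _ _ this).trans ?_
  rw [Finset.card_erase_of_mem (Finset.mem_univ _), Finset.card_univ, Fintype.card_fin, nsmul_eq_mul,
    Nat.cast_sub hlen]
  apply le_of_eq
  field_simp
  simp [mul_comm]

/-- lists of length `n`, within a set from the family, with small mesh -/
def Sm (𝒦 : Set (Set X)) (n : ℕ) (D : ℝ) (l : List X) : Prop :=
  l.length = n ∧ (∃ K ∈ 𝒦, ∀ x ∈ l, x ∈ K) ∧ ∀ x ∈ l, ∀ y ∈ l, dist x y ≤ D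

lemma sd_list_small (m : ℕ) (D : ℝ) (hD : 0 ≤ D) (n : ℕ) (hn : n ≤ m) (l : List X)
    (hl : l.length = n) (h : ∀ x ∈ l, ∀ y ∈ l, dist x y ≤ D) :
    Sup (fun l' => l'.length = n ∧ (∀ x ∈ l', x ∈ convexHull ℝ {x | x ∈ l}) ∧
      ∀ x ∈ l', ∀ y ∈ l', dist x y ≤ (1 - (m : ℝ)⁻¹) * D) (sd (Finsupp.single l 1)) := by
  induction n generalizing l with
  | zero =>
    obtain rfl := List.length_eq_zero_iff.1 hl
    rw [sd_nil]
    apply Sup.single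
    simp
  | succ n ih =>
    have hne : l ≠ [] := by rintro rfl; simp at hl
    have hm : (0 : ℝ) < m := by exact_mod_cast (by omega : 0 < m)
    have hm1 : (1 : ℝ) ≤ m := by exact_mod_cast (by omega : 1 ≤ m)
    have hcoef : (0:ℝ) ≤ 1 - (m : ℝ)⁻¹ := by
      have := inv_le_one_of_one_le₀ hm1
      linarith
    rw [sd_single hne]
    have e : d (Finsupp.single l 1) = ∑ i : Fin l.length, Finsupp.single (l.eraseIdx i) 1 := by
      simp [d, dL]
    rw [e, map_sum]
    refine Sup.cone (p := fun l' => l'.length = n ∧ (∀ x ∈ l', x ∈ convexHull ℝ {x | x ∈ l}) ∧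
      ∀ x ∈ l', ∀ y ∈ l', dist x y ≤ (1 - (m : ℝ)⁻¹) * D) (bary l) ?_ ?_
    · rintro l' ⟨h1, h2, h3⟩
      have hb : ∀ x ∈ convexHull ℝ {x | x ∈ l}, dist x (bary l) ≤ (1 - (m : ℝ)⁻¹) * D := by
        intro x hx
        have : convexHull ℝ {x | x ∈ l} ⊆ Metric.closedBall (bary l) ((1 - (m : ℝ)⁻¹) * D) := by
          apply convexHull_min _ (convex_closedBall _ _)
          intro y hy
          refine (dist_bary h hy).trans ?_
          have : (m : ℝ)⁻¹ ≤ (l.length : ℝ)⁻¹ := by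
            apply inv_anti₀
            · rw [hl]; positivity
            · rw [hl]; exact_mod_cast hn
          gcongr
        exact this hx
      refine ⟨by simp [h1], ?_, ?_⟩
      · intro x hx
        rcases List.mem_cons.1 hx with rfl | hx
        · exact bary_mem (convex_convexHull _ _) hne fun x hx => subset_convexHull _ _ hx
        · exact h2 x hx
      · intro x hx y hy
        rcases List.mem_cons.1 hx with rfl | hx <;> rcases List.mem_cons.1 hy with rfl | hy
        · simp only [dist_self]; positivity
        · rw [dist_comm]; exact hb _ (h2 y hy)
        · exact hb _ (h2 x hx)
        · exact h3 x hx y hy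
    · refine Sup.sum _ fun i _ => ?_
      have hsub : ∀ x ∈ l.eraseIdx i, x ∈ l := fun x hx => List.mem_of_mem_eraseIdx hx
      refine Sup.mono ?_ (ih (by omega) (l.eraseIdx i)
        (by rw [List.length_eraseIdx_of_lt i.2]; omega)
        (fun x hx y hy => h x (hsub x hx) y (hsub y hy)))
      rintro l' ⟨h1, h2, h3⟩
      exact ⟨h1, fun x hx => convexHull_mono (fun y hy => hsub y hy) (h2 x hx), h3⟩

lemma sd_small (𝒦 : Set (Set X)) (h𝒦 : ∀ K ∈ 𝒦, Convex ℝ K) (m n : ℕ) (hn : n ≤ m) (D : ℝ)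
    (hD : 0 ≤ D) (c : Ch X) (hc : Sup (Sm 𝒦 n D) c) :
    Sup (Sm 𝒦 n ((1 - (m : ℝ)⁻¹) * D)) (sd c) := by
  refine Sup.ext (fun l hl => ?_) hc
  obtain ⟨h1, ⟨K, hK, h2⟩, h3⟩ := hl
  have := sd_list_small m D hD n hn l h1 h3
  rw [sd, ext_single] at this
  refine this.mono ?_
  rintro l' ⟨h1', h2', h3'⟩
  exact ⟨h1', ⟨K, hK, fun x hx => convexHull_min (fun y hy => h2 y hy) (h𝒦 K hK) (h2' x hx)⟩, h3'⟩

lemma sd_iter_small (𝒦 : Set (Set X)) (h𝒦 : ∀ K ∈ 𝒦, Convex ℝ K) (m n : ℕ) (hm : 1 ≤ m)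
    (hn : n ≤ m) (D : ℝ)
    (hD : 0 ≤ D) (N : ℕ) (c : Ch X) (hc : Sup (Sm 𝒦 n D) c) :
    Sup (Sm 𝒦 n ((1 - (m : ℝ)⁻¹) ^ N * D)) (sd^[N] c) := by
  have hm1 : (1 : ℝ) ≤ m := by exact_mod_cast hm
  have hcoef : (0:ℝ) ≤ 1 - (m : ℝ)⁻¹ := by
    have := inv_le_one_of_one_le₀ hm1
    linarith
  induction N with
  | zero => simpa using hc
  | succ N ih =>
    rw [Function.iterate_succ_apply', pow_succ', mul_assoc]
    exact sd_small 𝒦 h𝒦 m n hn _ (by positivity) _ ih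

/-- octahedral sphere chains -/
noncomputable def sph (v : ℕ → X) : ℕ → Ch X
  | 0 => Finsupp.single [] 1
  | k + 1 => cone (v k) (sph v k) + mp Neg.neg (cone (v k) (sph v k))

lemma d_sph (v : ℕ → X) (k : ℕ) : d (sph v k) = 0 := by
  induction k with
  | zero => exact d_nil
  | succ k ih =>
    have : d (cone (v k) (sph v k)) = sph v k := by rw [d_cone, ih, map_zero, add_zero]
    rw [sph, map_add, ← mp_d, this]
    cases k with
    | zero => simp only [sph]; simp [mp, ch_add_self]
    | succ k =>
      have hh : ∀ c : Ch X, mp Neg.neg (mp Neg.neg c) = c := by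
        intro c
        have : mp Neg.neg ∘ₗ mp Neg.neg = (LinearMap.id : Ch X →ₗ[ZMod 2] Ch X) := by
          apply hom_ext; intro l; simp [mp]
        simpa using LinearMap.congr_fun this c
      simp only [sph]
      rw [map_add, hh, add_comm (mp _ _), ch_add_self]

lemma d_hemi (v : ℕ → X) (k : ℕ) : d (cone (v k) (sph v k)) = sph v k := by
  rw [d_cone, d_sph, map_zero, add_zero]

lemma sph_sup (v : ℕ → X) (k : ℕ) : Sup (fun l => l.length = k ∧ ∃ s : ℕ → ℤˣ,
    ∀ x ∈ l, ∃ i < k, x = s i • v i) (sph v k) := by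
  induction k with
  | zero => exact Sup.single ⟨rfl, 1, by simp⟩
  | succ k ih =>
    have h : Sup (fun l => l.length = k + 1 ∧ ∃ s : ℕ → ℤˣ,
        ∀ x ∈ l, ∃ i < k + 1, x = s i • v i) (cone (v k) (sph v k)) := by
      refine Sup.cone _ ?_ ih
      rintro l ⟨hl, s, hs⟩
      refine ⟨by simp [hl], Function.update s k 1, fun x hx => ?_⟩
      rcases List.mem_cons.1 hx with rfl | hx
      · exact ⟨k, by omega, by simp⟩
      · obtain ⟨i, hi, rfl⟩ := hs x hx
        exact ⟨i, by omega, by rw [Function.update_of_ne (by omega)]⟩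
    refine h.add (Sup.mp _ ?_ h)
    rintro l ⟨hl, s, hs⟩
    refine ⟨by simp [hl], -s, fun x hx => ?_⟩
    obtain ⟨y, hy, rfl⟩ := List.mem_map.1 hx
    obtain ⟨i, hi, rfl⟩ := hs y hy
    exact ⟨i, hi, by simp [Units.smul_def]⟩

lemma hemi_sup (v : ℕ → X) (k : ℕ) : Sup (fun l => l.length = k + 1 ∧ ∃ s : ℕ → ℤˣ,
    ∀ x ∈ l, ∃ i < k + 1, x = s i • v i) (cone (v k) (sph v k)) := by
  refine Sup.cone _ ?_ (sph_sup v k)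
  rintro l ⟨hl, s, hs⟩
  refine ⟨by simp [hl], Function.update s k 1, fun x hx => ?_⟩
  rcases List.mem_cons.1 hx with rfl | hx
  · exact ⟨k, by omega, by simp⟩
  · obtain ⟨i, hi, rfl⟩ := hs x hx
    exact ⟨i, by omega, by rw [Function.update_of_ne (by omega)]⟩

lemma sd_iter_d (N : ℕ) (c : Ch X) : d (sd^[N] c) = sd^[N] (d c) := by
  induction N generalizing c with
  | zero => rfl
  | succ N ih => rw [Function.iterate_succ_apply, ih, sd_d, Function.iterate_succ_apply]

lemma sd_iter_mp (N : ℕ) (c : Ch X) : mp Neg.neg (sd^[N] c) = sd^[N] (mp Neg.neg c) := by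
  induction N generalizing c with
  | zero => rfl
  | succ N ih => rw [Function.iterate_succ_apply, ih, sd_mp, Function.iterate_succ_apply]

lemma sd_iter_add (N : ℕ) (c c' : Ch X) : sd^[N] (c + c') = sd^[N] c + sd^[N] c' := by
  induction N generalizing c c' with
  | zero => rfl
  | succ N ih => simp only [Function.iterate_succ_apply, map_add, ih]

lemma sd_iter_nil (N : ℕ) : sd^[N] (Finsupp.single ([] : List X) 1) = Finsupp.single [] 1 := by
  induction N with
  | zero => rfl
  | succ N ih => rw [Function.iterate_succ_apply, sd_nil, ih]

/-- the main parity computation -/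
lemma parity (v : ℕ → X) (N : ℕ) (e : ℕ → X → ZMod 2) (he : ∀ n x, x ≠ 0 → e n (-x) = e n x + 1)
    (k : ℕ) (hS : ∀ j < k, Sup (fun l => ∀ x ∈ l, x ≠ 0) (sd^[N] (cone (v j) (sph v j)))) :
    ext (coB e) (sd^[N] (cone (v k) (sph v k))) = 1 := by
  induction k with
  | zero => rw [← coA_d, sd_iter_d, d_hemi, sph, sd_iter_nil]; simp [coA]
  | succ k ih =>
    rw [← coA_d, sd_iter_d, d_hemi, sph, sd_iter_add, ← sd_iter_mp, coA_mp,
      ih fun j hj => hS j (by omega)]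
    exact (hS k (by omega)).mono fun l hl n x hx => he n x (hl x hx)

lemma exists_anti (U : Set X) (hU : ∀ x ∈ U, -x ∉ U) :
    ∃ e : X → ZMod 2, (∀ x, x ≠ 0 → e (-x) = e x + 1) ∧ ∀ x ∈ U, e x = 0 := by
  classical
  have h2 : (1 : ZMod 2) + 1 = 0 := by decide
  refine ⟨fun x => if x ∈ U then 0 else if -x ∈ U then 1 else
    if WellOrderingRel x (-x) then 0 else 1, fun x hx => ?_, fun x hx => by simp [hx]⟩
  have hne : x ≠ -x := by
    intro h
    have h' : (2 : ℝ) • x = 0 := by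
      rw [two_smul]; nth_rewrite 2 [h]; exact add_neg_cancel x
    exact hx ((smul_eq_zero.1 h').resolve_left two_ne_zero)
  have ha : ¬ (WellOrderingRel x (-x) ∧ WellOrderingRel (-x) x) := fun h => asymm h.1 h.2
  have ht : WellOrderingRel x (-x) ∨ WellOrderingRel (-x) x := by
    rcases trichotomous_of WellOrderingRel x (-x) with h | h | h
    · exact Or.inl h
    · exact absurd h hne
    · exact Or.inr h
  have := hU x
  simp only [neg_neg]
  by_cases h1 : x ∈ U <;> by_cases h3 : -x ∈ U <;> by_cases h4 : WellOrderingRel x (-x) <;>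
    by_cases h5 : WellOrderingRel (-x) x <;> simp_all

lemma zero_notMem_hull {m : ℕ} {v : Fin m → X} (hv : LinearIndependent ℝ v) (s : Fin m → ℤˣ) :
    (0 : X) ∉ convexHull ℝ (Set.range fun i => s i • v i) := by
  intro h
  let L : (Fin m → ℝ) →ₗ[ℝ] X := Fintype.linearCombination ℝ fun i => s i • v i
  have hsub : convexHull ℝ (Set.range fun i => s i • v i) ⊆ L '' stdSimplex ℝ (Fin m) := by
    apply convexHull_min _ ((convex_stdSimplex ℝ _).linear_image L)
    rintro _ ⟨i, rfl⟩
    exact ⟨Pi.single i 1, single_mem_stdSimplex ℝ i, by simp [L]⟩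
  obtain ⟨t, ht, h0⟩ := hsub h
  have h1 : ∑ i, (t i * ((s i : ℤ) : ℝ)) • v i = 0 := by
    rw [← h0]
    simp only [L, Fintype.linearCombination_apply]
    refine Finset.sum_congr rfl fun i _ => ?_
    rw [mul_smul, Int.cast_smul_eq_zsmul, Units.smul_def]
  have h2 := Fintype.linearIndependent_iff.1 hv _ h1
  have h3 : ∀ i, t i = 0 := by
    intro i
    rcases Int.units_eq_one_or (s i) with h | h <;> simpa [h] using h2 i
  have h4 := ht.2
  simp [h3] at h4

/-- sets version: `F i` compact, disjoint from their negatives -/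
lemma core {n : ℕ} {v : Fin (n + 1) → X} (hv : LinearIndependent ℝ v) (F : Fin n → Set X)
    (hF : ∀ i, IsCompact (F i)) (hdis : ∀ i, ∀ x ∈ F i, -x ∉ F i) :
    ∃ s : Fin (n + 1) → ℤˣ, ∃ x ∈ convexHull ℝ (Set.range fun i => s i • v i),
      ∀ i, x ∉ F i ∧ -x ∉ F i := by
  by_contra! hcov
  -- thickenings
  have hδ : ∀ i, ∃ δ > 0, ∀ x ∈ Metric.thickening δ (F i), -x ∉ Metric.thickening δ (F i) := by
    intro i
    have hd : Disjoint (F i) (-F i) := by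
      rw [Set.disjoint_left]
      intro x hx hx'
      exact hdis i x hx hx'
    obtain ⟨δ, hδ, h⟩ := hd.exists_thickenings (hF i) (hF i).neg.isClosed
    refine ⟨δ, hδ, fun x hx hx' => Set.disjoint_left.1 h hx ?_⟩
    rw [Metric.mem_thickening_iff] at hx' ⊢
    obtain ⟨z, hz, hzd⟩ := hx'
    exact ⟨-z, by simpa using hz, by rwa [← dist_neg_neg, neg_neg]⟩
  choose δ hδ0 hδ using hδ
  obtain ⟨η, hη0, hη⟩ : ∃ η > 0, ∀ i, η ≤ δ i := by
    rcases isEmpty_or_nonempty (Fin n) with h | h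
    · exact ⟨1, one_pos, fun i => (h.false i).elim⟩
    · obtain ⟨i, hi⟩ := Finite.exists_min δ
      exact ⟨δ i, hδ0 i, hi⟩
  choose e he1 he2 using fun i => exists_anti (Metric.thickening (δ i) (F i)) (hδ i)
  obtain ⟨e0, he0, -⟩ := exists_anti (∅ : Set X) (by simp)
  let E : ℕ → X → ZMod 2 := fun k => if h : k < n then e ⟨k, h⟩ else e0
  have hE : ∀ k x, x ≠ 0 → E k (-x) = E k x + 1 := by
    intro k x hx
    by_cases h : k < n
    · simp only [E, dif_pos h]; exact he1 _ x hx
    · simp only [E, dif_neg h]; exact he0 x hx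
  let w : ℕ → X := fun k => if h : k < n + 1 then v ⟨k, h⟩ else 0
  let 𝒦 : Set (Set X) := Set.range fun s : Fin (n + 1) → ℤˣ =>
    convexHull ℝ (Set.range fun i => s i • v i)
  have h𝒦 : ∀ K ∈ 𝒦, Convex ℝ K := by
    rintro _ ⟨s, rfl⟩; exact convex_convexHull _ _
  have hbd : Bornology.IsBounded (⋃ s : Fin (n + 1) → ℤˣ,
      convexHull ℝ (Set.range fun i => s i • v i)) := by
    rw [Bornology.isBounded_iUnion]
    intro s
    exact ((Set.finite_range _).isCompact_convexHull (𝕜 := ℝ)).isBounded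
  obtain ⟨D, hD⟩ := Metric.isBounded_iff.1 hbd
  have hD0 : 0 ≤ D := by
    have hx : v 0 ∈ ⋃ s : Fin (n + 1) → ℤˣ, convexHull ℝ (Set.range fun i => s i • v i) :=
      Set.mem_iUnion.2 ⟨1, subset_convexHull _ _ ⟨0, by simp⟩⟩
    simpa using hD hx hx
  have hH : ∀ k ≤ n, Sup (Sm 𝒦 (k + 1) D) (cone (w k) (sph w k)) := by
    intro k hk
    refine (hemi_sup w k).mono ?_
    rintro l ⟨hl, s, hs⟩
    have hmem : ∀ x ∈ l, x ∈ convexHull ℝ (Set.range fun i : Fin (n + 1) => s i • v i) := by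
      intro x hx
      obtain ⟨i, hi, rfl⟩ := hs x hx
      refine subset_convexHull _ _ ⟨⟨i, by omega⟩, ?_⟩
      simp only [w, dif_pos (show i < n + 1 by omega)]
    refine ⟨hl, ⟨_, ⟨fun i => s i, rfl⟩, hmem⟩, fun x hx y hy => hD ?_ ?_⟩
    · exact Set.mem_iUnion.2 ⟨fun i => s i, hmem x hx⟩
    · exact Set.mem_iUnion.2 ⟨fun i => s i, hmem y hy⟩
  obtain ⟨N, hN⟩ : ∃ N : ℕ, (1 - ((n + 1 : ℕ) : ℝ)⁻¹) ^ N * D < η := by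
    have h1 : (1 : ℝ) ≤ ((n + 1 : ℕ) : ℝ) := by exact_mod_cast (by omega : 1 ≤ n + 1)
    have h2 := inv_le_one_of_one_le₀ h1
    have h3 : (0 : ℝ) < ((n + 1 : ℕ) : ℝ)⁻¹ := by positivity
    have := (tendsto_pow_atTop_nhds_zero_of_lt_one (r := 1 - ((n + 1 : ℕ) : ℝ)⁻¹)
      (by linarith) (by linarith)).mul_const D
    rw [zero_mul] at this
    exact (this.eventually_lt_const hη0).exists
  have hS : ∀ k ≤ n, Sup (Sm 𝒦 (k + 1) ((1 - ((n + 1 : ℕ) : ℝ)⁻¹) ^ N * D))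
      (sd^[N] (cone (w k) (sph w k))) := fun k hk =>
    sd_iter_small 𝒦 h𝒦 (n + 1) (k + 1) (by omega) (by omega) D hD0 N _ (hH k hk)
  have hpar := parity w N E hE n (fun j hj => (hS j hj.le).mono (by
    rintro l ⟨-, ⟨_, ⟨s, rfl⟩, h⟩, -⟩ x hx rfl
    exact zero_notMem_hull hv s (h 0 hx)))
  have hzero : ext (coB E) (sd^[N] (cone (w n) (sph w n))) =
      ext (fun _ => 0) (sd^[N] (cone (w n) (sph w n))) := by
    refine eval_congr ?_ (hS n le_rfl)
    rintro l ⟨hl, ⟨_, ⟨s, rfl⟩, h⟩, hd⟩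
    obtain ⟨x, t, rfl⟩ : ∃ x t, l = x :: t := by
      cases l with
      | nil => simp at hl
      | cons x t => exact ⟨x, t, rfl⟩
    obtain ⟨i, hi⟩ := hcov s x (h x (by simp))
    have hnz : ∀ y ∈ x :: t, y ≠ 0 := by
      rintro y hy rfl
      exact zero_notMem_hull hv s (h 0 hy)
    have hEi : E i = e i := by simp [E]
    by_cases hx : x ∈ F i
    · refine coB_zero E _ i (by rw [hl]; omega) 0 fun y hy => ?_
      rw [hEi]
      apply he2
      rw [Metric.mem_thickening_iff]
      exact ⟨x, hx, ((hd y hy x (by simp)).trans_lt hN).trans_le (hη i)⟩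
    · have hx' := hi hx
      refine coB_zero E _ i (by rw [hl]; omega) 1 fun y hy => ?_
      have : e i (-y) = 0 := by
        apply he2
        rw [Metric.mem_thickening_iff]
        refine ⟨-x, hx', ?_⟩
        rw [dist_neg_neg]
        exact ((hd y hy x (by simp)).trans_lt hN).trans_le (hη i)
      rw [hEi]
      have h1 := he1 i y (hnz y hy)
      rw [this] at h1
      have h2 : (1 : ZMod 2) + 1 = 0 := by decide
      linear_combination -h1 - h2
  rw [hpar] at hzero
  simp [ext, Finsupp.linearCombination_apply] at hzero

end
end LSB

/-- LSB in normed spaces: Let `X` be a real normed space containing `m`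
linearly independent vectors (`m ≥ 1`), and let `r > 0`. If the sphere `S(θ, r)` is the
union of `m` closed sets `A 0, …, A (m-1)`, then some `A i₀` contains a pair of
antipodal points `x, -x` of the sphere. -/
theorem lsb_normed_space
    {X : Type*} [NormedAddCommGroup X] [NormedSpace ℝ X]
    (m : ℕ) (hm : 1 ≤ m) (hLI : ∃ v : Fin m → X, LinearIndependent ℝ v)
    (r : ℝ) (hr : 0 < r)
    (A : Fin m → Set X) (hclosed : ∀ i, IsClosed (A i))
    (hcover : {x : X | ‖x‖ = r} = ⋃ i, A i) :
    ∃ (i₀ : Fin m) (x : X), ‖x‖ = r ∧ x ∈ A i₀ ∧ -x ∈ A i₀ := by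
  obtain ⟨n, rfl⟩ : ∃ n, m = n + 1 := ⟨m - 1, by omega⟩
  obtain ⟨v, hv⟩ := hLI
  by_contra! hcon
  let P : Set X := ⋃ s : Fin (n + 1) → ℤˣ, convexHull ℝ (Set.range fun i => s i • v i)
  have hP : IsCompact P := isCompact_iUnion fun s =>
    (Set.finite_range _).isCompact_convexHull (𝕜 := ℝ)
  have hP0 : (0 : X) ∉ P := by
    intro h
    obtain ⟨s, hs⟩ := Set.mem_iUnion.1 h
    exact LSB.zero_notMem_hull hv s hs
  let Q : Set X := P ∪ -P
  have hQ : IsCompact Q := hP.union hP.neg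
  have hQ0 : ∀ x ∈ Q, x ≠ 0 := by
    rintro x (hx | hx) rfl
    · exact hP0 hx
    · exact hP0 (by simpa using hx)
  let ρ : X → X := fun x => (r / ‖x‖) • x
  have hρ : ContinuousOn ρ Q := by
    refine ContinuousOn.smul (ContinuousOn.div continuousOn_const continuous_norm.continuousOn ?_)
      continuousOn_id
    intro x hx
    exact norm_ne_zero_iff.2 (hQ0 x hx)
  have hρn : ∀ x ≠ 0, ‖ρ x‖ = r := by
    intro x hx
    have : ‖x‖ ≠ 0 := norm_ne_zero_iff.2 hx
    simp only [ρ, norm_smul, norm_div, norm_norm, Real.norm_of_nonneg hr.le]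
    field_simp
  have hρneg : ∀ x, ρ (-x) = - ρ x := by intro x; simp [ρ]
  have hρA : ∀ x ≠ 0, ∃ i, ρ x ∈ A i := by
    intro x hx
    have : ρ x ∈ {x : X | ‖x‖ = r} := hρn x hx
    rw [hcover] at this
    exact Set.mem_iUnion.1 this
  obtain ⟨s, x, hx, hxF⟩ := LSB.core hv (fun i : Fin n => Q ∩ ρ ⁻¹' (A i.castSucc))
    (fun i => hQ.of_isClosed_subset (hρ.preimage_isClosed_of_isClosed hQ.isClosed (hclosed _))
      Set.inter_subset_left)
    (by
      rintro i x ⟨hxQ, hx⟩ ⟨-, hx'⟩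
      rw [Set.mem_preimage, hρneg] at hx'
      exact hcon _ _ (hρn x (hQ0 x hxQ)) hx hx')
  have hxP : x ∈ P := Set.mem_iUnion.2 ⟨s, hx⟩
  have hxQ : x ∈ Q := Or.inl hxP
  have hxQ' : -x ∈ Q := Or.inr (by simpa using hxP)
  have h1 : ρ x ∈ A (Fin.last n) := by
    obtain ⟨i, hi⟩ := hρA x (hQ0 x hxQ)
    cases i using Fin.lastCases with
    | last => exact hi
    | cast i => exact absurd ⟨hxQ, hi⟩ (hxF i).1
  have h2 : ρ (-x) ∈ A (Fin.last n) := by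
    obtain ⟨i, hi⟩ := hρA (-x) (hQ0 _ hxQ')
    cases i using Fin.lastCases with
    | last => exact hi
    | cast i => exact absurd ⟨hxQ', hi⟩ (hxF i).2
  rw [hρneg] at h2
  exact hcon _ _ (hρn x (hQ0 x hxQ)) h1 h2
end

section
/- Let S = {x ∈ ℓ² : ‖x‖ = 1}, let D = {d_i : i ∈ ℕ} ⊆ S be geodesically dense in S, and let 0 < ε < 1. Then the sets A_i = {x ∈ S : ‖x − d_i‖ ≤ ε}, i ∈ ℕ, are closed, pairwise congruent, their union is S, and no A_i contains a pair {x, −x} of antipodal points of S. -/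
open scoped RealInnerProductSpace

/-- If `D = {d i : i ∈ ℕ}` is a geodesically dense subset of the unit
sphere `S` of `ℓ²` and `0 < ε < 1`, then the sets `A i = {x ∈ S : ‖x - d i‖ ≤ ε}` are
closed, pairwise congruent, their union is `S`, and no `A i` contains a pair of
antipodal points of `S`. -/
theorem caps_cover_sphere_no_antipodal
    (d : ℕ → lp (fun _ : ℕ => ℝ) 2) (hd : ∀ i, ‖d i‖ = 1)
    (hdense : ∀ β : ℝ, 0 < β → ∀ x : lp (fun _ : ℕ => ℝ) 2, ‖x‖ = 1 →
      ∃ i : ℕ, Real.arccos ⟪x, d i⟫ < β)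
    (ε : ℝ) (hε0 : 0 < ε) (hε1 : ε < 1)
    (A : ℕ → Set (lp (fun _ : ℕ => ℝ) 2))
    (hA : ∀ i, A i = {x : lp (fun _ : ℕ => ℝ) 2 | ‖x‖ = 1 ∧ ‖x - d i‖ ≤ ε}) :
    (∀ i, IsClosed (A i)) ∧
    (∀ i j, ∃ f : lp (fun _ : ℕ => ℝ) 2 → lp (fun _ : ℕ => ℝ) 2,
      Function.Surjective f ∧ (∀ x y, ‖f x - f y‖ = ‖x - y‖) ∧ f '' A i = A j) ∧
    (⋃ i, A i) = {x : lp (fun _ : ℕ => ℝ) 2 | ‖x‖ = 1} ∧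
    (∀ i, ¬ ∃ x : lp (fun _ : ℕ => ℝ) 2, x ∈ A i ∧ -x ∈ A i) := by
  refine ⟨fun i => ?_, fun i j => ?_, ?_, fun i => ?_⟩
  · rw [hA i]
    exact (isClosed_eq continuous_norm continuous_const).inter
      (isClosed_le (continuous_id.sub continuous_const).norm continuous_const)
  · let g := (ℝ ∙ (d i - d j))ᗮ.reflection
    have hg : g (d i) = d j :=
      Submodule.reflection_sub ((hd i).trans (hd j).symm)
    refine ⟨g, g.surjective, fun x y => ?_, ?_⟩
    · rw [← map_sub, g.norm_map]
    · ext y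
      rw [hA i, hA j]
      constructor
      · rintro ⟨x, ⟨hx1, hx2⟩, rfl⟩
        refine ⟨by rw [g.norm_map, hx1], ?_⟩
        rw [← hg, ← map_sub, g.norm_map]
        exact hx2
      · rintro ⟨hy1, hy2⟩
        obtain ⟨x, rfl⟩ := g.surjective y
        refine ⟨x, ⟨by rw [← hy1, g.norm_map], ?_⟩, rfl⟩
        rw [← hg, ← map_sub, g.norm_map] at hy2
        exact hy2
  · ext x
    simp only [Set.mem_iUnion, Set.mem_setOf_eq, hA]
    constructor
    · rintro ⟨i, hx, -⟩
      exact hx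
    · intro hx
      obtain ⟨i, hi⟩ := hdense (Real.arccos (1 - ε ^ 2 / 2))
        (Real.arccos_pos.2 (by nlinarith)) x hx
      refine ⟨i, hx, ?_⟩
      have h1 : 1 - ε ^ 2 / 2 < ⟪x, d i⟫ := by
        by_contra h
        exact absurd (Real.antitone_arccos (not_lt.1 h)) (not_le.2 hi)
      have h2 := norm_sub_sq_real x (d i)
      rw [hx, hd i] at h2
      exact abs_le_of_sq_le_sq' (by linarith) hε0.le |>.2
  · rintro ⟨x, hx, hx'⟩
    rw [hA i] at hx hx'
    have h1 := norm_sub_le (x - d i) (-x - d i)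
    have h2 : (x - d i) - (-x - d i) = (2 : ℝ) • x := by
      rw [two_smul]; abel
    rw [h2, norm_smul, hx.1] at h1
    norm_num at h1
    linarith [hx.2, hx'.2]
end

section
/- Two ommatidiums in ℓ² of the same angle and the same radius are congruent: if s₁ ≠ e₁, s₂ ≠ e₂, γ ∈ [0,π], and ‖e₁ − s₁‖ = ‖e₂ − s₂‖, then there exists a motion f of ℓ² with f(C(s₁,e₁,γ)) = C(s₂,e₂,γ). -/
/-- The ommatidium `C(s, e, γ)` in `ℓ²`. -/
noncomputable def ommatidium (s e : lp (fun _ : ℕ => ℝ) 2) (γ : ℝ) :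
    Set (lp (fun _ : ℕ => ℝ) 2) :=
  {x | ‖x - s‖ ≤ ‖e - s‖ ∧ (x = s ∨ InnerProductGeometry.angle (x - s) (e - s) ≤ γ)}

/-- Two ommatidiums in `ℓ²` of the same angle and the same radius are
congruent: there is a motion of `ℓ²` mapping one onto the other. -/
theorem ommatidium_congr
    (s₁ e₁ s₂ e₂ : lp (fun _ : ℕ => ℝ) 2) (h₁ : s₁ ≠ e₁) (h₂ : s₂ ≠ e₂)
    (γ : ℝ) (hγ0 : 0 ≤ γ) (hγπ : γ ≤ Real.pi)
    (hrad : ‖e₁ - s₁‖ = ‖e₂ - s₂‖) :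
    ∃ f : lp (fun _ : ℕ => ℝ) 2 → lp (fun _ : ℕ => ℝ) 2,
      Function.Surjective f ∧ (∀ x y, ‖f x - f y‖ = ‖x - y‖) ∧
      f '' ommatidium s₁ e₁ γ = ommatidium s₂ e₂ γ := by
  obtain ⟨L, hL⟩ : ∃ L : lp (fun _ : ℕ => ℝ) 2 ≃ₗᵢ[ℝ] lp (fun _ : ℕ => ℝ) 2,
      L (e₁ - s₁) = e₂ - s₂ :=
    ⟨_, Submodule.reflection_sub hrad⟩
  have hmem : ∀ x, (L (x - s₁) + s₂ ∈ ommatidium s₂ e₂ γ ↔ x ∈ ommatidium s₁ e₁ γ) := by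
    intro x
    simp only [ommatidium, Set.mem_setOf_eq, add_sub_cancel_right, ← hL]
    have hang : InnerProductGeometry.angle (L (x - s₁)) (L (e₁ - s₁))
        = InnerProductGeometry.angle (x - s₁) (e₁ - s₁) :=
      L.toLinearIsometry.angle_map _ _
    have heq : L (x - s₁) + s₂ = s₂ ↔ x = s₁ := by
      rw [add_eq_right, L.map_eq_zero_iff, sub_eq_zero]
    rw [hang, heq, L.norm_map, L.norm_map]
  have hsurj : Function.Surjective (fun x => L (x - s₁) + s₂) := fun y =>
    ⟨L.symm (y - s₂) + s₁, by simp⟩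
  refine ⟨fun x => L (x - s₁) + s₂, hsurj, ?_, ?_⟩
  · intro x y
    have : L (x - s₁) + s₂ - (L (y - s₁) + s₂) = L (x - y) := by
      simp only [map_sub]; abel
    simp only [this, L.norm_map]
  · ext y
    constructor
    · rintro ⟨x, hx, rfl⟩
      exact (hmem x).2 hx
    · intro hy
      obtain ⟨x, rfl⟩ := hsurj y
      exact ⟨x, (hmem x).1 hy, rfl⟩
end

section
/- Let d ∈ ℓ² with ‖d‖ = 1 and let 0 ≤ γ ≤ arccos(1/4). Then the ommatidium C(−d/2, d/2, γ) is contained in the closed unit ball {x ∈ ℓ² : ‖x‖ ≤ 1}. -/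
/-- For a unit vector `d` in `ℓ²` and `0 ≤ γ ≤ arccos (1/4)`, the
ommatidium `C(-d/2, d/2, γ)` is contained in the closed unit ball. -/
theorem ommatidium_inside_ball
    (d : lp (fun _ : ℕ => ℝ) 2) (hd : ‖d‖ = 1)
    (γ : ℝ) (hγ0 : 0 ≤ γ) (hγ : γ ≤ Real.arccos (1/4)) :
    ommatidium (-((1:ℝ)/2) • d) (((1:ℝ)/2) • d) γ ⊆
      {x : lp (fun _ : ℕ => ℝ) 2 | ‖x‖ ≤ 1} := by
  rintro x ⟨hx1, hx2⟩
  have hed : ((1:ℝ)/2) • d - (-((1:ℝ)/2) • d) = d := by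
    module
  rw [hed] at hx1 hx2
  rw [hd] at hx1
  obtain ⟨y, hy⟩ : ∃ y, y = x - (-((1:ℝ)/2) • d) := ⟨_, rfl⟩
  have hxy : x = y - ((1:ℝ)/2) • d := by
    rw [hy]; module
  rw [← hy] at hx1 hx2
  have hin : (1/4) * ‖y‖ ≤ inner ℝ y d := by
    rcases hx2 with h | h
    · have h0 : y = 0 := by rw [hy, h, sub_self]
      simp [h0]
    · have h1 : Real.cos (Real.arccos (1/4)) ≤ Real.cos (InnerProductGeometry.angle y d) :=
        Real.cos_le_cos_of_nonneg_of_le_pi (InnerProductGeometry.angle_nonneg _ _)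
          (Real.arccos_le_pi _) (h.trans hγ)
      rw [Real.cos_arccos (by norm_num) (by norm_num)] at h1
      have h2 := InnerProductGeometry.cos_angle_mul_norm_mul_norm y d
      rw [hd, mul_one] at h2
      rw [← h2]
      exact mul_le_mul_of_nonneg_right h1 (norm_nonneg _)
  have hn : ‖x‖ ^ 2 = ‖y‖ ^ 2 - inner ℝ y d + 1/4 := by
    rw [hxy, norm_sub_sq_real, inner_smul_right, norm_smul, hd]
    norm_num
    ring
  show ‖x‖ ≤ 1
  have h0 := norm_nonneg y
  have h3 := norm_nonneg x
  nlinarith [mul_nonneg h0 (sub_nonneg.2 hx1)]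
end

section
/- Let s ≠ e in ℓ² and γ ∈ (0,π] (γ > 0). Then the midpoint (s + e)/2 belongs to the topological interior of the ommatidium C(s,e,γ). -/
/-- If `s ≠ e` and `0 < γ ≤ π`, then the midpoint `(s + e)/2` belongs to
the topological interior of `C(s, e, γ)`. -/
theorem ommatidium_midpoint_interior
    (s e : lp (fun _ : ℕ => ℝ) 2) (hse : s ≠ e)
    (γ : ℝ) (hγ0 : 0 < γ) (hγπ : γ ≤ Real.pi) :
    ((1:ℝ)/2) • (s + e) ∈ interior (ommatidium s e γ) := by
  have hv : e - s ≠ 0 := sub_ne_zero.mpr (Ne.symm hse)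
  have hm : ((1:ℝ)/2) • (s + e) - s = ((1:ℝ)/2) • (e - s) := by module
  have hm0 : ((1:ℝ)/2) • (s + e) - s ≠ 0 := by
    rw [hm]
    exact smul_ne_zero (by norm_num) hv
  have hpos : 0 < ‖e - s‖ := norm_pos_iff.mpr hv
  rw [mem_interior_iff_mem_nhds]
  have h1 : ∀ᶠ x in nhds (((1:ℝ)/2) • (s + e)), ‖x - s‖ < ‖e - s‖ := by
    have hc : ContinuousAt (fun x => ‖x - s‖) (((1:ℝ)/2) • (s + e)) := by fun_prop
    refine hc.eventually_lt continuousAt_const ?_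
    rw [hm, norm_smul, Real.norm_of_nonneg (by norm_num)]
    linarith
  have h2 : ∀ᶠ x in nhds (((1:ℝ)/2) • (s + e)),
      InnerProductGeometry.angle (x - s) (e - s) < γ := by
    have hc : ContinuousAt (fun x => InnerProductGeometry.angle (x - s) (e - s))
        (((1:ℝ)/2) • (s + e)) := by
      have hf : ContinuousAt (fun x => (x - s, e - s)) (((1:ℝ)/2) • (s + e)) := by fun_prop
      exact ContinuousAt.comp (f := fun x => (x - s, e - s))
        (InnerProductGeometry.continuousAt_angle hm0 hv) hf
    refine hc.eventually_lt continuousAt_const ?_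
    rw [hm, InnerProductGeometry.angle_smul_left_of_pos _ _ (by norm_num),
      InnerProductGeometry.angle_self hv]
    exact hγ0
  filter_upwards [h1, h2] with x hx1 hx2
  exact ⟨hx1.le, Or.inr hx2.le⟩
end

section
/- Let s ≠ e in ℓ² and 0 ≤ γ ≤ π/2. Then the ommatidium C(s,e,γ) is a convex set. -/
/-- The angular condition is a (convex) cone inequality. -/
theorem omm_angle_iff {E : Type*} [NormedAddCommGroup E] [InnerProductSpace ℝ E]
    (u v : E) (hv : v ≠ 0) (γ : ℝ) (h0 : 0 ≤ γ) (h1 : γ ≤ Real.pi) :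
    (u = 0 ∨ InnerProductGeometry.angle u v ≤ γ) ↔
      Real.cos γ * (‖u‖ * ‖v‖) ≤ inner ℝ u v := by
  by_cases hu : u = 0
  · simp [hu]
  have hpos : 0 < ‖u‖ * ‖v‖ := mul_pos (norm_pos_iff.2 hu) (norm_pos_iff.2 hv)
  rw [← InnerProductGeometry.cos_angle_mul_norm_mul_norm u v,
    mul_le_mul_iff_left₀ hpos,
    Real.strictAntiOn_cos.le_iff_ge ⟨h0, h1⟩
      ⟨InnerProductGeometry.angle_nonneg u v, InnerProductGeometry.angle_le_pi u v⟩]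
  simp [hu]

/-- If `s ≠ e` and `0 ≤ γ ≤ π/2`, then the ommatidium `C(s, e, γ)` is
convex. -/
theorem ommatidium_convex
    (s e : lp (fun _ : ℕ => ℝ) 2) (hse : s ≠ e)
    (γ : ℝ) (hγ0 : 0 ≤ γ) (hγ : γ ≤ Real.pi / 2) :
    Convex ℝ (ommatidium s e γ) := by
  have hv : e - s ≠ 0 := sub_ne_zero.2 hse.symm
  have hpi : γ ≤ Real.pi := by linarith [Real.pi_pos]
  have hc : 0 ≤ Real.cos γ := Real.cos_nonneg_of_mem_Icc ⟨by linarith [Real.pi_pos], hγ⟩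
  have key : ∀ x, x ∈ ommatidium s e γ ↔ ‖x - s‖ ≤ ‖e - s‖ ∧
      Real.cos γ * (‖x - s‖ * ‖e - s‖) ≤ inner ℝ (x - s) (e - s) := by
    intro x
    rw [← omm_angle_iff (x - s) (e - s) hv γ hγ0 hpi, sub_eq_zero]
    rfl
  intro x hx y hy a b ha hb hab
  rw [key] at hx hy ⊢
  have hxy : a • x + b • y - s = a • (x - s) + b • (y - s) := by
    have : s = a • s + b • s := by rw [← add_smul, hab, one_smul]
    nth_rewrite 1 [this]
    rw [smul_sub, smul_sub]
    abel
  have hn : ‖a • (x - s) + b • (y - s)‖ ≤ a * ‖x - s‖ + b * ‖y - s‖ := by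
    refine (norm_add_le _ _).trans ?_
    rw [norm_smul, norm_smul, Real.norm_of_nonneg ha, Real.norm_of_nonneg hb]
  rw [hxy]
  refine ⟨hn.trans ?_, ?_⟩
  · have h1 := mul_le_mul_of_nonneg_left hx.1 ha
    have h2 := mul_le_mul_of_nonneg_left hy.1 hb
    have h3 : a * ‖e - s‖ + b * ‖e - s‖ = ‖e - s‖ := by rw [← add_mul, hab, one_mul]
    linarith
  · rw [inner_add_left, real_inner_smul_left, real_inner_smul_left]
    have h1 := mul_le_mul_of_nonneg_left hx.2 ha
    have h2 := mul_le_mul_of_nonneg_left hy.2 hb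
    have h3 := mul_le_mul_of_nonneg_left
      (mul_le_mul_of_nonneg_right hn (norm_nonneg (e - s))) hc
    linarith
end

section
/- Let X be a strictly convex real normed space containing m linearly independent vectors (m ∈ ℕ, m ≥ 1). Let E ⊆ X satisfy B(θ,1) ⊆ E ⊆ B̄(θ,1), where B(θ,1) and B̄(θ,1) are the open and closed unit balls, and suppose E = A₁ ∪ … ∪ A_m where the sets A₁, …, A_m are pairwise congruent. Then either θ belongs to the interior of every A_i, or θ belongs to the interior of no A_i. -/
/-- Given `n + 1` nonzero vectors, there is a unit vector at distance more than `1` from each. -/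
theorem exists_far_unit
    {X : Type*} [NormedAddCommGroup X] [NormedSpace ℝ X]
    (hNCS : ∀ x y : X, x ≠ y → ‖x‖ = 1 → ‖y‖ = 1 →
      ∀ l : ℝ, 0 < l → l < 1 → ‖l • x + (1 - l) • y‖ < 1)
    (n : ℕ) (v : Fin (n + 1) → X) (hv : LinearIndependent ℝ v)
    (w : Fin (n + 1) → X) (hw : ∀ i, w i ≠ 0) :
    ∃ x : X, ‖x‖ = 1 ∧ ∀ i, 1 < ‖x - w i‖ := by
  let V : Submodule ℝ X := Submodule.span ℝ (Set.range v ∪ Set.range w)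
  have : FiniteDimensional ℝ V :=
    FiniteDimensional.span_of_finite ℝ ((Set.finite_range v).union (Set.finite_range w))
  have hvV : ∀ i, v i ∈ V := fun i => Submodule.subset_span (Or.inl ⟨i, rfl⟩)
  have hwV : ∀ i, w i ∈ V := fun i => Submodule.subset_span (Or.inr ⟨i, rfl⟩)
  let v' : Fin (n + 1) → V := fun i => ⟨v i, hvV i⟩
  let w' : Fin (n + 1) → V := fun i => ⟨w i, hwV i⟩
  have hv' : LinearIndependent ℝ v' := LinearIndependent.of_comp V.subtype hv
  have hdim : n + 1 ≤ Module.finrank ℝ V := by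
    simpa using hv'.fintype_card_le_finrank
  let W : Submodule ℝ V := Submodule.span ℝ (Set.range (fun i : Fin n => w' i.succ))
  have hWdim : Module.finrank ℝ W ≤ n := by
    simpa [Set.finrank, W] using finrank_range_le_card (R := ℝ) (fun i : Fin n => w' i.succ)
  have hWlt : W < ⊤ := by
    rw [lt_top_iff_ne_top]
    intro h
    rw [h, finrank_top] at hWdim
    omega
  obtain ⟨f0, hf0, hf0W⟩ := Submodule.exists_le_ker_of_lt_top W hWlt
  obtain ⟨f, hf, hfw⟩ : ∃ f : V →ₗ[ℝ] ℝ, f ≠ 0 ∧ ∀ i, f (w' i) ≤ 0 := by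
    have hz : ∀ i : Fin n, f0 (w' i.succ) = 0 := fun i =>
      hf0W (Submodule.subset_span ⟨i, rfl⟩)
    rcases le_total (f0 (w' 0)) 0 with h | h
    · exact ⟨f0, hf0, fun i => Fin.cases h (fun j => (hz j).le) i⟩
    · refine ⟨-f0, neg_ne_zero.mpr hf0, fun i => Fin.cases ?_ (fun j => ?_) i⟩
      · simpa using h
      · simp [hz j]
  have : ProperSpace V := FiniteDimensional.proper ℝ V
  have hfc : Continuous f := f.continuous_of_finiteDimensional
  obtain ⟨x, hxB, hxmax⟩ := (isCompact_closedBall (0 : V) 1).exists_isMaxOn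
    ⟨0, by simp⟩ hfc.continuousOn
  have hxle : ‖x‖ ≤ 1 := by simpa using hxB
  have hmax : ∀ y : V, ‖y‖ ≤ 1 → f y ≤ f x := fun y hy => hxmax (by simpa using hy)
  have hbound : ∀ y : V, f y ≤ f x * ‖y‖ := by
    intro y
    by_cases hy : y = 0
    · simp [hy]
    have hpos : 0 < ‖y‖ := norm_pos_iff.mpr hy
    have h1 := hmax (‖y‖⁻¹ • y) (by rw [norm_smul, norm_inv, norm_norm, inv_mul_cancel₀ hpos.ne'])
    rw [map_smul, smul_eq_mul, inv_mul_le_iff₀ hpos] at h1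
    linarith
  have hM : 0 < f x := by
    have h0 : 0 ≤ f x := by simpa using hmax 0 (by simp)
    refine lt_of_le_of_ne h0 fun h => hf ?_
    ext y
    have h1 := hbound y
    have h2 := hbound (-y)
    rw [← h] at h1 h2
    simp only [map_neg, zero_mul] at h1 h2
    simp only [LinearMap.zero_apply]
    linarith
  have hone : ∀ y : V, f x ≤ f y → 1 ≤ ‖y‖ := by
    intro y hy
    have := hbound y
    by_contra! hlt
    nlinarith
  have hx1 : ‖x‖ = 1 := le_antisymm hxle (hone x le_rfl)
  refine ⟨x, by simpa using hx1, fun i => ?_⟩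
  by_contra! hle
  have hge : 1 ≤ ‖x - w' i‖ := hone _ (by rw [map_sub]; linarith [hfw i])
  have heq : ‖(x : X) - w i‖ = 1 := le_antisymm hle hge
  have hlt := hNCS x (x - w i) (fun h => hw i (sub_eq_self.mp h.symm)) (by simpa using hx1) heq (1 / 2)
    (by norm_num) (by norm_num)
  have hge2 : 1 ≤ ‖(1 / 2 : ℝ) • x + (1 - 1 / 2 : ℝ) • (x - w' i)‖ := by
    apply hone
    simp only [map_add, map_smul, map_sub, smul_eq_mul]
    linarith [hfw i]
  exact absurd hlt (not_lt.mpr hge2)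

/-- Main proposition: Let `X` be a strictly convex real normed space
containing `m ≥ 1` linearly independent vectors. Let `E` satisfy
`B(θ,1) ⊆ E ⊆ B̄(θ,1)` and `E = A 0 ∪ … ∪ A (m-1)` with the `A i` pairwise congruent.
Then either `θ` is in the interior of every `A i`, or of none of them. -/
theorem center_in_all_or_no_interiors
    {X : Type*} [NormedAddCommGroup X] [NormedSpace ℝ X]
    (hNCS : ∀ x y : X, x ≠ y → ‖x‖ = 1 → ‖y‖ = 1 →
      ∀ l : ℝ, 0 < l → l < 1 → ‖l • x + (1 - l) • y‖ < 1)
    (m : ℕ) (hm : 1 ≤ m) (hLI : ∃ v : Fin m → X, LinearIndependent ℝ v)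
    (E : Set X) (hE1 : Metric.ball (0 : X) 1 ⊆ E) (hE2 : E ⊆ Metric.closedBall (0 : X) 1)
    (A : Fin m → Set X) (hcover : E = ⋃ i, A i)
    (hcongr : ∀ i j, ∃ f : X → X, Function.Surjective f ∧
      (∀ x y : X, ‖f x - f y‖ = ‖x - y‖) ∧ f '' A i = A j) :
    (∀ i, (0 : X) ∈ interior (A i)) ∨ (∀ i, (0 : X) ∉ interior (A i)) := by
  obtain ⟨n, rfl⟩ : ∃ n, m = n + 1 := ⟨m - 1, by omega⟩
  obtain ⟨v, hv⟩ := hLI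
  by_contra! hcon
  obtain ⟨⟨j0, hj0⟩, ⟨i0, hi0⟩⟩ := hcon
  have key : ∀ i, ∃ w : X, w ≠ 0 ∧ A i ⊆ Metric.closedBall w 1 := by
    intro i
    obtain ⟨k, hk⟩ : ∃ k, ¬ ((0 : X) ∈ interior (A k) ↔ (0 : X) ∈ interior (A i)) := by
      by_cases h : (0 : X) ∈ interior (A i)
      · exact ⟨j0, fun h' => hj0 (h'.mpr h)⟩
      · exact ⟨i0, fun h' => h (h'.mp hi0)⟩
    obtain ⟨g, hgs, hgi, hgA⟩ := hcongr k i
    have hiso : Isometry g := Isometry.of_dist_eq fun x y => by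
      rw [dist_eq_norm, dist_eq_norm, hgi]
    refine ⟨g 0, fun h0 => hk ?_, ?_⟩
    · let e : X ≃ᵢ X := ⟨Equiv.ofBijective g ⟨hiso.injective, hgs⟩, hiso⟩
      have himg : g '' interior (A k) = interior (A i) := by
        rw [← hgA]
        exact e.toHomeomorph.image_interior (A k)
      rw [← himg]
      conv_rhs => rw [← h0]
      exact (hiso.injective.mem_set_image).symm
    · rw [← hgA]
      rintro _ ⟨a, ha, rfl⟩
      have haE : a ∈ E := hcover ▸ Set.mem_iUnion.mpr ⟨k, ha⟩
      have := hE2 haE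
      rw [Metric.mem_closedBall] at this ⊢
      rwa [hiso.dist_eq]
  choose w hw0 hwA using key
  obtain ⟨x, hx1, hx⟩ := exists_far_unit hNCS n v hv w hw0
  have hopen : ∀ᶠ t : ℝ in nhdsWithin 1 (Set.Iio 1), (∀ i, 1 < ‖t • x - w i‖) := by
    rw [Filter.eventually_all]
    intro i
    have hc : Continuous fun t : ℝ => ‖t • x - w i‖ := by fun_prop
    have := hc.continuousAt.eventually (lt_mem_nhds (a := 1) (b := ‖(1 : ℝ) • x - w i‖)
      (by simpa using hx i))
    exact this.filter_mono nhdsWithin_le_nhds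
  have hmem : ∀ᶠ t : ℝ in nhdsWithin 1 (Set.Iio 1), t ∈ Set.Ioo (0 : ℝ) 1 :=
    Ioo_mem_nhdsLT (by norm_num)
  obtain ⟨t, ht, ht0, ht1⟩ := (hopen.and hmem).exists
  have htE : t • x ∈ E := hE1 (by
    rw [mem_ball_zero_iff, norm_smul, hx1, mul_one, Real.norm_of_nonneg ht0.le]
    exact ht1)
  rw [hcover] at htE
  obtain ⟨i, hi⟩ := Set.mem_iUnion.mp htE
  have h1 := hwA i hi
  rw [Metric.mem_closedBall, dist_eq_norm] at h1
  exact absurd (ht i) (not_lt.mpr h1)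
end

section
/- Let X be an infinite-dimensional strictly convex real normed space. Then for every m ∈ ℕ with m ≥ 1: if E ⊆ X satisfies B(θ,1) ⊆ E ⊆ B̄(θ,1) and E = A₁ ∪ … ∪ A_m where A₁, …, A_m are pairwise congruent, then either θ belongs to the interior of every A_i, or θ belongs to the interior of no A_i. In particular, a ball in X cannot be covered by finitely many congruent subsets so that its centre belongs to the interiors of some of them and not of the others. -/
namespace LS

/-- Coboundary mod 2 on functions of lists. -/
def D {X : Type*} : (List X → ZMod 2) → List X → ZMod 2
  | _, [] => 0
  | f, x :: l => f l + D (fun l' => f (x :: l')) l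

/-- Dual of the prism operator. -/
def P {X : Type*} (p q : X → X) : (List X → ZMod 2) → List X → ZMod 2
  | _, [] => 0
  | f, x :: l => f (p x :: q x :: l.map q) + P p q (fun l' => f (p x :: l')) l

/-- Sign alternation indicator. -/
def Alt : Bool → List ℕ → ZMod 2
  | _, [] => 1
  | s, n :: l => if n.bodd = s then Alt (!s) l else 0

lemma two_z (a : ZMod 2) : a + a = 0 := CharTwo.add_self_eq_zero a

lemma D_add {X : Type*} (l : List X) : ∀ f g : List X → ZMod 2,
    D (fun a => f a + g a) l = D f l + D g l := by
  induction l with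
  | nil => intro f g; simp [D]
  | cons x l ih =>
    intro f g
    simp only [D, ih]
    ring

lemma D_zero {X : Type*} (l : List X) : D (fun _ : List X => 0) l = 0 := by
  induction l with
  | nil => simp [D]
  | cons x l ih => simp [D, ih]

lemma P_add {X : Type*} (p q : X → X) (l : List X) : ∀ f g : List X → ZMod 2,
    P p q (fun a => f a + g a) l = P p q f l + P p q g l := by
  induction l with
  | nil => intro f g; simp [P]
  | cons x l ih =>
    intro f g
    simp only [P, ih]
    ring

lemma D_map {X Y : Type*} (h : X → Y) (l : List X) : ∀ f : List Y → ZMod 2,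
    D f (l.map h) = D (fun l' => f (l'.map h)) l := by
  induction l with
  | nil => intro f; simp [D]
  | cons x l ih => intro f; simp only [List.map_cons, D, ih]

lemma prism {X : Type*} (p q : X → X) (l : List X) : ∀ f : List X → ZMod 2,
    P p q (D f) l + D (P p q f) l = f (l.map p) + f (l.map q) := by
  induction l with
  | nil => intro f; simp [P, D, two_z]
  | cons x l ih =>
    intro f
    have h1 := ih (fun l' => f (p x :: l'))
    simp only [P, D, List.map_cons, P_add, D_add, D_map] at *
    have h2 := two_z (P p q f l)
    have h3 := two_z (D (fun l' => f (p x :: q x :: l'.map q)) l)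
    have h4 := two_z (f (p x :: l.map q))
    linear_combination h1 + h2 + h3 + h4

lemma D_perm {X : Type*} {l l' : List X} (h : l.Perm l') : ∀ f : List X → ZMod 2,
    (∀ a b : List X, a.Perm b → f a = f b) → D f l = D f l' := by
  induction h with
  | nil => intro f _; rfl
  | cons x h ih =>
    intro f hf
    simp only [D]
    rw [hf _ _ h, ih _ (fun a b hab => hf _ _ (hab.cons x))]
  | swap x y l =>
    intro f hf
    simp only [D]
    have : (fun l' => f (x :: y :: l')) = (fun l' => f (y :: x :: l')) := by
      funext l'; exact hf _ _ (List.Perm.swap _ _ _)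
    rw [this]; ring
  | trans _ _ ih1 ih2 => intro f hf; rw [ih1 f hf, ih2 f hf]

lemma D_alt (l : List ℕ) : ∀ s, D (Alt s) l = Alt true l + Alt false l := by
  induction l with
  | nil => intro s; simp [D, Alt, two_z]
  | cons n l ih =>
    intro s
    simp only [D]
    by_cases h : n.bodd = s
    · have : (fun l' => Alt s (n :: l')) = Alt (!s) := by
        funext l'; simp [Alt, h]
      rw [this, ih]
      have h2 := two_z (Alt s l)
      cases s <;> simp [Alt, h] at * <;> linear_combination h2
    · have : (fun l' => Alt s (n :: l')) = fun _ => 0 := by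
        funext l'; simp [Alt, h]
      rw [this, D_zero]
      have h' : n.bodd = !s := by cases s <;> simp_all
      cases s <;> simp [Alt, h']

/-- Sort a list of labels. -/
def srt (l : List ℕ) : List ℕ := l.insertionSort (· ≤ ·)

lemma srt_perm (l : List ℕ) : (srt l).Perm l := List.perm_insertionSort _ l

lemma srt_pw (l : List ℕ) : (srt l).Pairwise (· ≤ ·) := List.pairwise_insertionSort _ l

lemma eq_of_sorted {l l' : List ℕ} (h : l.Perm l') (h1 : l.Pairwise (· ≤ ·))
    (h2 : l'.Pairwise (· ≤ ·)) : l = l' :=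
  List.Perm.eq_of_pairwise (fun _ _ _ _ => le_antisymm) h1 h2 h

lemma srt_eq {l l' : List ℕ} (h : l.Perm l') : srt l = srt l' :=
  eq_of_sorted (((srt_perm l).trans h).trans (srt_perm l').symm) (srt_pw l) (srt_pw l')

/-- Alternation after sorting. -/
def A (s : Bool) (l : List ℕ) : ZMod 2 := Alt s (srt l)

lemma D_congr {X : Type*} (l : List X) : ∀ f g : List X → ZMod 2,
    (∀ l', l'.Sublist l → f l' = g l') → D f l = D g l := by
  induction l with
  | nil => intro f g h; simp [D]
  | cons x l ih =>
    intro f g h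
    simp only [D]
    rw [h l (List.sublist_cons_self x l), ih _ _ (fun l' hl' => h _ (hl'.cons_cons x))]

lemma D_A (l : List ℕ) (s) : D (A s) l = A true l + A false l := by
  rw [D_perm (srt_perm l).symm (A s) (fun a b h => by simp [A, srt_eq h])]
  rw [D_congr (srt l) (A s) (Alt s)]
  · exact D_alt _ s
  · intro l' hl'
    have : srt l' = l' := eq_of_sorted (srt_perm l') (srt_pw l') ((srt_pw l).sublist hl')
    simp [A, this]

/-- flip of label -/
def fl (n : ℕ) : ℕ := if n % 2 = 0 then n + 1 else n - 1

lemma fl_bodd (n : ℕ) : (fl n).bodd = !n.bodd := by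
  unfold fl
  have := Nat.mod_two_of_bodd n
  split_ifs with h
  · simp
  · obtain ⟨k, rfl⟩ : ∃ k, n = k + 1 := ⟨n - 1, by omega⟩
    simp

lemma Alt_fl (l : List ℕ) : ∀ s, Alt s (l.map fl) = Alt (!s) l := by
  induction l with
  | nil => intro s; rfl
  | cons n l ih =>
    intro s
    simp only [List.map_cons, Alt, fl_bodd, ih]
    cases s <;> cases n.bodd <;> simp

lemma A_fl (l : List ℕ) (h : ∀ a ∈ l, ∀ b ∈ l, a / 2 = b / 2 → a = b) (s) :
    A s (l.map fl) = A (!s) l := by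
  have : srt (l.map fl) = (srt l).map fl := by
    apply eq_of_sorted ((srt_perm _).trans ((srt_perm l).symm.map fl)) (srt_pw _)
    rw [List.pairwise_map]
    refine (srt_pw l).imp_of_mem ?_
    intro a b ha hb hab
    have := h a ((srt_perm l).mem_iff.1 ha) b ((srt_perm l).mem_iff.1 hb)
    unfold fl
    split_ifs <;> omega
  rw [A, this, Alt_fl, A]

lemma Alt_strict (l : List ℕ) : ∀ s, l.Pairwise (· ≤ ·) →
    (∀ a ∈ l, ∀ b ∈ l, a / 2 = b / 2 → a = b) → Alt s l ≠ 0 →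
    (l.map (· / 2)).IsChain (· < ·) := by
  induction l with
  | nil => intros; simp
  | cons n l ih =>
    intro s hp h hA
    cases l with
    | nil => simp
    | cons k l =>
      simp only [Alt] at hA
      split_ifs at hA with h1 h2
      all_goals try exact absurd rfl hA
      simp only [List.map_cons, List.isChain_cons_cons]
      refine ⟨?_, ?_⟩
      · have h3 : n ≤ k := (List.pairwise_cons.1 hp).1 k (by simp)
        have h4 := h n (by simp) k (by simp)
        have h5 : n ≠ k := by
          rintro rfl
          rw [h1] at h2; cases s <;> simp at h2
        omega
      · have := ih (!s) (List.pairwise_cons.1 hp).2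
          (fun a ha b hb => h a (List.mem_cons_of_mem _ ha) b (List.mem_cons_of_mem _ hb))
          (by simpa [Alt, h2] using hA)
        simpa using this

lemma A_zero (m : ℕ) (l : List ℕ) (h : ∀ a ∈ l, ∀ b ∈ l, a / 2 = b / 2 → a = b)
    (hm : ∀ a ∈ l, a / 2 < m) (hl : m < l.length) (s) : A s l = 0 := by
  by_contra hA
  have h1 := Alt_strict (srt l) s (srt_pw l)
    (fun a ha b hb => h a ((srt_perm l).mem_iff.1 ha) b ((srt_perm l).mem_iff.1 hb)) hA
  have h2 := List.isChain_iff_pairwise.1 h1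
  have h3 : ((srt l).map (· / 2)).Nodup := h2.imp (fun h => h.ne)
  have h4 : ((srt l).map (· / 2)).toFinset ⊆ Finset.range m := by
    intro a ha
    simp only [List.mem_toFinset, List.mem_map] at ha
    obtain ⟨b, hb, rfl⟩ := ha
    exact Finset.mem_range.2 (hm b ((srt_perm l).mem_iff.1 hb))
  have h5 := Finset.card_le_card h4
  rw [List.toFinset_card_of_nodup h3, List.length_map, (srt_perm l).length_eq,
    Finset.card_range] at h5
  omega

lemma P_eq_zero {X : Type*} (p q : X → X) (l : List X) : ∀ f : List X → ZMod 2,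
    (∀ l' : List X, l'.length = l.length + 1 → (∀ y ∈ l', ∃ x ∈ l, y = p x ∨ y = q x) →
      f l' = 0) → P p q f l = 0 := by
  induction l with
  | nil => intro f h; simp [P]
  | cons x l ih =>
    intro f h
    simp only [P]
    rw [ih, h, add_zero]
    · simp
    · intro y hy
      simp only [List.mem_cons, List.mem_map] at hy
      rcases hy with rfl | rfl | ⟨a, ha, rfl⟩
      · exact ⟨x, by simp⟩
      · exact ⟨x, by simp⟩
      · exact ⟨a, by simp [ha]⟩
    · intro l' h1 h2
      apply h
      · simp [h1]
      · intro y hy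
        rcases List.mem_cons.1 hy with rfl | hy
        · exact ⟨x, by simp⟩
        · obtain ⟨a, ha, h⟩ := h2 y hy
          exact ⟨a, by simp [ha], h⟩


section normed
variable {X : Type*} [NormedAddCommGroup X] [NormedSpace ℝ X]

/-- Iterated joins, homeomorphic to spheres. -/
def K (e : ℕ → X) : ℕ → Set X
  | 0 => {e 0, -e 0}
  | k + 1 => (fun z : ℝ × X × ℝ => z.1 • ((1 - z.2.2) • z.2.1 + z.2.2 • e (k + 1))) ''
      (({1, -1} : Set ℝ) ×ˢ (K e k ×ˢ Set.Icc (0 : ℝ) 1))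

lemma K_compact (e : ℕ → X) (k : ℕ) : IsCompact (K e k) := by
  induction k with
  | zero => exact (Set.toFinite ({e 0, -e 0} : Set X)).isCompact
  | succ k ih =>
    refine IsCompact.image ?_ (by fun_prop)
    exact (Set.toFinite _).isCompact.prod (ih.prod isCompact_Icc)

lemma K_neg (e : ℕ → X) (k : ℕ) {x : X} (hx : x ∈ K e k) : -x ∈ K e k := by
  cases k with
  | zero =>
    simp only [K, Set.mem_insert_iff, Set.mem_singleton_iff] at *
    rcases hx with rfl | rfl <;> simp
  | succ k =>
    obtain ⟨⟨s, y, t⟩, ⟨hs, hy, ht⟩, rfl⟩ := hx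
    refine ⟨⟨-s, y, t⟩, ⟨?_, hy, ht⟩, by simp only []; module⟩
    simp only [Set.mem_insert_iff, Set.mem_singleton_iff] at *
    rcases hs with rfl | rfl <;> simp

lemma K_step (e : ℕ → X) (k : ℕ) {x : X} (hx : x ∈ K e k) {t : ℝ} (h0 : 0 ≤ t) (h1 : t ≤ 1) :
    (1 - t) • x + t • e (k + 1) ∈ K e (k + 1) :=
  ⟨⟨1, x, t⟩, ⟨by simp, hx, h0, h1⟩, by simp⟩

lemma K_mono (e : ℕ → X) : Monotone (K e) := by
  refine monotone_nat_of_le_succ fun k x hx => ?_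
  simpa using K_step e k hx le_rfl zero_le_one

lemma K_bdd (e : ℕ → X) (M : ℝ) (k : ℕ) (hM : ∀ j ≤ k, ‖e j‖ ≤ M) {x : X} (hx : x ∈ K e k) :
    ‖x‖ ≤ M := by
  induction k generalizing x with
  | zero =>
    simp only [K, Set.mem_insert_iff, Set.mem_singleton_iff] at hx
    rcases hx with rfl | rfl <;> simpa using hM 0
  | succ k ih =>
    obtain ⟨⟨s, y, t⟩, ⟨hs, hy, ht0, ht1⟩, rfl⟩ := hx
    have hy' := ih (fun j hj => hM j (by omega)) hy
    have he := hM (k + 1) le_rfl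
    simp only at *
    have hs' : ‖s‖ = 1 := by
      simp only [Set.mem_insert_iff, Set.mem_singleton_iff] at hs
      rcases hs with rfl | rfl <;> simp
    rw [norm_smul, hs', one_mul]
    refine (norm_add_le _ _).trans ?_
    rw [norm_smul, norm_smul, Real.norm_of_nonneg ht0, Real.norm_of_nonneg (by linarith)]
    nlinarith

lemma K_span (e : ℕ → X) (k : ℕ) {x : X} (hx : x ∈ K e k) :
    x ∈ Submodule.span ℝ (e '' Set.Iic k) := by
  induction k generalizing x with
  | zero =>
    have h : e 0 ∈ Submodule.span ℝ (e '' Set.Iic 0) := Submodule.subset_span ⟨0, by simp, rfl⟩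
    simp only [K, Set.mem_insert_iff, Set.mem_singleton_iff] at hx
    rcases hx with rfl | rfl
    · exact h
    · exact Submodule.neg_mem _ h
  | succ k ih =>
    obtain ⟨⟨s, y, t⟩, ⟨hs, hy, ht0, ht1⟩, rfl⟩ := hx
    refine Submodule.smul_mem _ _ (Submodule.add_mem _ (Submodule.smul_mem _ _ ?_)
      (Submodule.smul_mem _ _ ?_))
    · refine Submodule.span_mono (Set.image_mono ?_) (ih hy)
      intro j hj; simp only [Set.mem_Iic] at *; omega
    · exact Submodule.subset_span ⟨k + 1, by simp, rfl⟩

lemma K_ne (e : ℕ → X) (he : LinearIndependent ℝ e) (k : ℕ) {x : X} (hx : x ∈ K e k) :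
    x ≠ 0 := by
  induction k generalizing x with
  | zero =>
    have h : e 0 ≠ 0 := he.ne_zero 0
    simp only [K, Set.mem_insert_iff, Set.mem_singleton_iff] at hx
    rcases hx with rfl | rfl
    · exact h
    · exact neg_ne_zero.2 h
  | succ k ih =>
    obtain ⟨⟨s, y, t⟩, ⟨hs, hy, ht0, ht1⟩, rfl⟩ := hx
    simp only at *
    have hs' : s ≠ 0 := by
      simp only [Set.mem_insert_iff, Set.mem_singleton_iff] at hs
      rcases hs with rfl | rfl <;> simp
    refine smul_ne_zero hs' fun h0 => ?_
    by_cases ht : t = 0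
    · subst ht
      exact ih hy (by simpa using h0)
    · have h1 : e (k + 1) ∉ Submodule.span ℝ (e '' Set.Iic k) :=
        he.notMem_span_image (by simp)
      apply h1
      have h2 : e (k + 1) = t⁻¹ • (-((1 - t) • y)) := by
        rw [neg_eq_of_add_eq_zero_right h0, smul_smul, inv_mul_cancel₀ ht, one_smul]
      rw [h2]
      exact Submodule.smul_mem _ _ (Submodule.neg_mem _ (Submodule.smul_mem _ _ (K_span e k hy)))

lemma D_neg (f : List X → ZMod 2) (l : List X) :
    D f (l.map Neg.neg) = D (fun l' => f (l'.map Neg.neg)) l := D_map _ _ _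

/-- good lists -/
def Good (e : ℕ → X) (δ : ℝ) (k : ℕ) (l : List X) : Prop :=
  l.length = k + 1 ∧ (∀ x ∈ l, x ∈ K e k) ∧ ∀ x ∈ l, ∀ y ∈ l, ‖x - y‖ ≤ k * δ

lemma Good.neg {e : ℕ → X} {δ : ℝ} {k : ℕ} {l : List X} (h : Good e δ k l) :
    Good e δ k (l.map Neg.neg) := by
  obtain ⟨h1, h2, h3⟩ := h
  refine ⟨by simpa using h1, ?_, ?_⟩
  · intro x hx
    obtain ⟨y, hy, rfl⟩ := List.mem_map.1 hx
    exact K_neg e k (h2 y hy)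
  · intro x hx x' hx'
    obtain ⟨y, hy, rfl⟩ := List.mem_map.1 hx
    obtain ⟨y', hy', rfl⟩ := List.mem_map.1 hx'
    rw [neg_sub_neg, norm_sub_rev]
    exact h3 y hy y' hy'

/-- contraction -/
def cp (v : X) (t : ℝ) (x : X) : X := (1 - t) • x + t • v

lemma cp_dist (v x y : X) (s t : ℝ) (hs : 0 ≤ s) (hs1 : s ≤ 1) :
    ‖cp v s x - cp v t y‖ ≤ ‖x - y‖ + |s - t| * ‖y - v‖ := by
  have : cp v s x - cp v t y = (1 - s) • (x - y) + (t - s) • (y - v) := by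
    unfold cp; module
  rw [this]
  refine (norm_add_le _ _).trans ?_
  rw [norm_smul, norm_smul, Real.norm_of_nonneg (by linarith), Real.norm_eq_abs, abs_sub_comm t s]
  have := norm_nonneg (x - y)
  nlinarith

lemma good_prism {e : ℕ → X} {δ : ℝ} {k N j : ℕ} {l l' : List X} {C : ℝ} (hj : j < N)
    (hC : ∀ x ∈ K e k, ‖x - e (k + 1)‖ ≤ C) (hδ : C / N ≤ δ) (hδ0 : 0 ≤ δ)
    (h : Good e δ k l) (hl : l'.length = l.length + 1)
    (hm : ∀ y ∈ l', ∃ x ∈ l, y = cp (e (k + 1)) (j / N) x ∨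
      y = cp (e (k + 1)) ((j + 1 : ℕ) / N) x) : Good e δ (k + 1) l' := by
  have hN : (0 : ℝ) < N := by exact_mod_cast (by omega : 0 < N)
  have hj' : ((j + 1 : ℕ) : ℝ) ≤ N := by exact_mod_cast hj
  have a1 : (0 : ℝ) ≤ j / N := by positivity
  have a2 : (0 : ℝ) ≤ (j + 1 : ℕ) / N := by positivity
  have a3 : ((j + 1 : ℕ) : ℝ) / N ≤ 1 := by rw [div_le_one hN]; exact hj'
  have a4 : ((j + 1 : ℕ) : ℝ) / N - j / N = 1 / N := by push_cast; field_simp; ring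
  have a6 : (0 : ℝ) ≤ 1 / N := by positivity
  have a5 : (j : ℝ) / N ≤ 1 := by linarith
  obtain ⟨h1, h2, h3⟩ := h
  have key : ∀ y ∈ l', ∃ x ∈ l, ∃ t : ℝ, (t = j / N ∨ t = (j + 1 : ℕ) / N) ∧
      y = cp (e (k + 1)) t x := by
    intro y hy
    obtain ⟨x, hx, rfl | rfl⟩ := hm y hy
    · exact ⟨x, hx, _, Or.inl rfl, rfl⟩
    · exact ⟨x, hx, _, Or.inr rfl, rfl⟩
  refine ⟨by omega, ?_, ?_⟩
  · intro y hy
    obtain ⟨x, hx, t, ht, rfl⟩ := key y hy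
    apply K_step e k (h2 x hx)
    · rcases ht with rfl | rfl <;> assumption
    · rcases ht with rfl | rfl <;> assumption
  · intro y hy y' hy'
    obtain ⟨x, hx, t, ht, rfl⟩ := key y hy
    obtain ⟨x', hx', t', ht', rfl⟩ := key y' hy'
    have b1 : 0 ≤ t := by rcases ht with rfl | rfl <;> assumption
    have b2 : t ≤ 1 := by rcases ht with rfl | rfl <;> assumption
    have b3 : |t - t'| ≤ 1 / N := by
      rw [abs_le]
      rcases ht with rfl | rfl <;> rcases ht' with rfl | rfl <;> constructor <;> linarith
    have b4 := h3 x hx x' hx'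
    have b5 := hC x' (h2 x' hx')
    have b6 : |t - t'| * ‖x' - e (k + 1)‖ ≤ 1 / N * C :=
      mul_le_mul b3 b5 (norm_nonneg _) a6
    have b7 := cp_dist (e (k + 1)) x x' t t' b1 b2
    have b8 : 1 / N * C = C / N := by ring
    push_cast
    linarith

lemma chain_exists (e : ℕ → X) (m : ℕ) (lab : X → ℕ) (δ C : ℝ) (N : ℕ) (hN : 0 < N)
    (hC : ∀ k < m, ∀ x ∈ K e k, ‖x - e (k + 1)‖ ≤ C) (hδ : C / N ≤ δ) (hδ0 : 0 ≤ δ)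
    (h1 : ∀ x ∈ K e m, lab (-x) = fl (lab x))
    (h2 : ∀ x ∈ K e m, ∀ y ∈ K e m, ‖x - y‖ ≤ m * δ → lab x / 2 = lab y / 2 → lab x = lab y)
    (k : ℕ) (hk : k ≤ m) :
    ∃ c : (List X → ZMod 2) →+ ZMod 2,
      (∀ f, (∀ l, Good e δ k l → f l = 0) → c f = 0) ∧
      (∀ f, c (fun l => D f l + D f (l.map Neg.neg)) = 0) ∧
      c (fun l => A true (l.map lab) + A false (l.map lab)) = 1 := by
  induction k with
  | zero =>
    refine ⟨Pi.evalAddMonoidHom _ [e 0], ?_, ?_, ?_⟩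
    · intro f hf
      apply hf
      refine ⟨by simp, by simp [K], by simp⟩
    · intro f
      simp [D, two_z]
    · simp only [Pi.evalAddMonoidHom_apply, List.map_cons, List.map_nil, A]
      have : srt [lab (e 0)] = [lab (e 0)] := rfl
      rw [this]
      cases h : (lab (e 0)).bodd <;> simp [Alt, h]
  | succ k ih =>
    obtain ⟨c, c1, c2, c3⟩ := ih (by omega)
    set p : ℕ → X → X := fun j => cp (e (k + 1)) (j / N) with hp
    have cadd : ∀ f g : List X → ZMod 2, c (fun l => f l + g l) = c f + c g :=
      fun f g => c.map_add f g
    let z : (List X → ZMod 2) →+ ZMod 2 :=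
      { toFun := fun f => c (fun l => f l + f (l.map Neg.neg))
        map_zero' := by
          have : (fun l : List X => (0 : List X → ZMod 2) l + (0 : List X → ZMod 2)
            (l.map Neg.neg)) = 0 := by funext l; simp
          rw [this, map_zero]
        map_add' := by
          intro f g
          rw [← cadd]
          congr 1
          funext l
          simp only [Pi.add_apply]
          ring }
    have hz : ∀ f, z f = c (fun l => f l + f (l.map Neg.neg)) := fun f => rfl
    let Ph : ℕ → (List X → ZMod 2) →+ (List X → ZMod 2) := fun j =>
      { toFun := fun f => P (p j) (p (j + 1)) f
        map_zero' := by
          funext l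
          exact P_eq_zero _ _ _ _ (fun _ _ _ => rfl)
        map_add' := by
          intro f g
          funext l
          exact P_add _ _ _ _ _ }
    let c' : (List X → ZMod 2) →+ ZMod 2 := ∑ j ∈ Finset.range N, z.comp (Ph j)
    have hc' : ∀ f, c' f = ∑ j ∈ Finset.range N, z (P (p j) (p (j + 1)) f) := by
      intro f
      simp only [c', AddMonoidHom.finsetSum_apply]
      rfl
    have zD : ∀ f, z (D f) = 0 := fun f => c2 f
    have tele : ∀ (f : List X → ZMod 2) (n : ℕ),
        ∑ j ∈ Finset.range n, z (P (p j) (p (j + 1)) (D f)) =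
          z (fun l => f (l.map (p 0))) + z (fun l => f (l.map (p n))) := by
      intro f n
      induction n with
      | zero => simp [two_z]
      | succ n ihn =>
        rw [Finset.sum_range_succ, ihn]
        have e1 : P (p n) (p (n + 1)) (D f) = D (P (p n) (p (n + 1)) f) +
            ((fun l => f (l.map (p n))) + (fun l => f (l.map (p (n + 1))))) := by
          funext l
          have := prism (p n) (p (n + 1)) l f
          have t := two_z (D (P (p n) (p (n + 1)) f) l)
          simp only [Pi.add_apply]
          linear_combination this - t
        rw [e1, map_add, map_add, zD]
        have t := two_z (z (fun l => f (l.map (p n))))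
        linear_combination t
    have p0 : p 0 = id := by funext x; simp [hp, cp]
    have pN : ∀ x, p N x = e (k + 1) := by
      intro x
      have : (N : ℝ) ≠ 0 := by positivity
      simp [hp, cp, div_self this]
    have key : ∀ f, c' (D f) = c (fun l => f l + f (l.map Neg.neg)) := by
      intro f
      rw [hc', tele, p0]
      have : z (fun l => f (l.map (p N))) = 0 := by
        rw [hz]
        have : (fun l : List X => f (l.map (p N)) + f ((l.map Neg.neg).map (p N))) = 0 := by
          funext l
          have : (l.map Neg.neg).map (p N) = l.map (p N) := by
            rw [List.map_map]
            apply List.map_congr_left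
            intro x _
            simp [pN]
          rw [this, two_z]; rfl
        rw [this, map_zero]
      rw [this, add_zero, hz]
      simp
    refine ⟨c', ?_, ?_, ?_⟩
    · intro f hf
      rw [hc']
      apply Finset.sum_eq_zero
      intro j hj
      rw [hz]
      apply c1
      have aux : ∀ l, Good e δ k l → P (p j) (p (j + 1)) f l = 0 := by
        intro l hl
        apply P_eq_zero
        intro l' hl' hm
        exact hf l' (good_prism (Finset.mem_range.1 hj) (hC k (by omega)) hδ hδ0 hl hl' hm)
      intro l hl
      rw [aux l hl, aux _ hl.neg, add_zero]
    · intro f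
      have e1 : (fun l => D f l + D f (l.map Neg.neg)) =
          D f + D (fun l => f (l.map Neg.neg)) := by
        funext l
        rw [Pi.add_apply, D_neg]
      rw [e1, map_add, key, key, ← cadd]
      have : (fun l : List X => f l + f (l.map Neg.neg) + (f (l.map Neg.neg) +
          f ((l.map Neg.neg).map Neg.neg))) = 0 := by
        funext l
        have : (l.map Neg.neg).map Neg.neg = l := by simp [List.map_map]
        rw [this]
        have t1 := two_z (f l)
        have t2 := two_z (f (l.map Neg.neg))
        simp only [Pi.zero_apply]
        linear_combination t1 + t2
      rw [this, map_zero]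
    · have e1 : (fun l : List X => A true (l.map lab) + A false (l.map lab)) =
          D (fun l => A true (l.map lab)) := by
        funext l
        rw [← D_A _ true, D_map]
      rw [e1, key, ← c3, ← sub_eq_zero, ← map_sub]
      apply c1
      rintro l ⟨g1, g2, g3⟩
      have hKm : ∀ x ∈ l, x ∈ K e m := fun x hx => K_mono e (by omega : k ≤ m) (g2 x hx)
      have e2 : (l.map Neg.neg).map lab = (l.map lab).map fl := by
        rw [List.map_map, List.map_map]
        apply List.map_congr_left
        intro x hx
        exact h1 x (hKm x hx)
      simp only [Pi.sub_apply]
      rw [e2, A_fl, Bool.not_true, sub_self]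
      intro a ha b hb hab
      obtain ⟨x, hx, rfl⟩ := List.mem_map.1 ha
      obtain ⟨y, hy, rfl⟩ := List.mem_map.1 hb
      refine h2 x (hKm x hx) y (hKm y hy) ((g3 x hx y hy).trans ?_) hab
      have : (k : ℝ) ≤ m := by exact_mod_cast (by omega : k ≤ m)
      gcongr

/-- Tucker type lemma. -/
lemma tucker (e : ℕ → X) (m : ℕ) (lab : X → ℕ) (ε : ℝ) (hε : 0 < ε)
    (h1 : ∀ x ∈ K e m, lab (-x) = fl (lab x))
    (h2 : ∀ x ∈ K e m, ∀ y ∈ K e m, ‖x - y‖ < ε → lab x / 2 = lab y / 2 → lab x = lab y)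
    (h3 : ∀ x ∈ K e m, lab x / 2 < m) : False := by
  obtain ⟨M, hM⟩ : ∃ M : ℝ, ∀ j ≤ m, ‖e j‖ ≤ M := by
    refine ⟨∑ j ∈ Finset.range (m + 1), ‖e j‖, fun j hj => ?_⟩
    exact Finset.single_le_sum (f := fun j => ‖e j‖) (fun _ _ => norm_nonneg _)
      (Finset.mem_range.2 (by omega))
  have hM0 : 0 ≤ M := (norm_nonneg _).trans (hM 0 (by omega))
  obtain ⟨N, hN⟩ := exists_nat_gt ((m * (M + M)) / ε)
  have hN0 : (0 : ℝ) < N := lt_of_le_of_lt (by positivity) hN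
  have hN' : 0 < N := by exact_mod_cast hN0
  have hfin : m * ((M + M) / N) < ε := by
    rw [div_lt_iff₀ hε] at hN
    rw [← mul_div_assoc, div_lt_iff₀ hN0]
    linarith
  have h2' : ∀ x ∈ K e m, ∀ y ∈ K e m, ‖x - y‖ ≤ m * ((M + M) / N) →
      lab x / 2 = lab y / 2 → lab x = lab y :=
    fun x hx y hy h => h2 x hx y hy (h.trans_lt hfin)
  obtain ⟨c, c1, c2, c3⟩ := chain_exists e m lab ((M + M) / N) (M + M) N hN'
    (by
      intro k hk x hx
      refine (norm_sub_le _ _).trans (add_le_add ?_ (hM _ (by omega)))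
      exact K_bdd e M k (fun j hj => hM j (by omega)) hx)
    le_rfl (by positivity) h1 h2' m le_rfl
  rw [c1] at c3
  · exact zero_ne_one c3
  · rintro l ⟨g1, g2, g3⟩
    have key : ∀ s, A s (l.map lab) = 0 := by
      intro s
      apply A_zero m
      · intro a ha b hb hab
        obtain ⟨x, hx, rfl⟩ := List.mem_map.1 ha
        obtain ⟨y, hy, rfl⟩ := List.mem_map.1 hb
        exact h2' x (g2 x hx) y (g2 y hy) (g3 x hx y hy) hab
      · intro a ha
        obtain ⟨x, hx, rfl⟩ := List.mem_map.1 ha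
        exact h3 x (g2 x hx)
      · simp [g1]
    rw [key, key, add_zero]

/-- Lusternik-Schnirelmann in infinite dimension. -/
lemma lusternik (hinf : ¬ FiniteDimensional ℝ X) (m : ℕ) (hm : 1 ≤ m) (F : Fin m → Set X)
    (hF : ∀ i, IsClosed (F i)) (hcov : ∀ x : X, ‖x‖ = 1 → ∃ i, x ∈ F i) :
    ∃ i x, ‖x‖ = 1 ∧ x ∈ F i ∧ -x ∈ F i := by
  classical
  by_contra hno
  push Not at hno
  obtain ⟨e, he⟩ : ∃ e : ℕ → X, LinearIndependent ℝ e := by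
    let b := Module.Basis.ofVectorSpace ℝ X
    have : Infinite (Module.Basis.ofVectorSpaceIndex ℝ X) := by
      by_contra h
      rw [not_infinite_iff_finite] at h
      exact hinf (Module.Finite.of_basis b)
    exact ⟨_, b.linearIndependent.comp _ (Infinite.natEmbedding _).injective⟩
  have : Nonempty (Fin m) := ⟨⟨0, hm⟩⟩
  let u : X → X := fun x => ‖x‖⁻¹ • x
  have uneg : ∀ x, u (-x) = -u x := fun x => by simp [u]
  have un : ∀ x, x ≠ 0 → ‖u x‖ = 1 := fun x hx => norm_smul_inv_norm (𝕜 := ℝ) hx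
  let ix : X → Fin m := fun x => Classical.epsilon (fun i => u x ∈ F i ∨ -u x ∈ F i)
  have ixneg : ∀ x, ix (-x) = ix x := by
    intro x
    simp only [ix]
    congr 1
    funext i
    rw [uneg, neg_neg, or_comm]
  have ixs : ∀ x, x ≠ 0 → u x ∈ F (ix x) ∨ -u x ∈ F (ix x) := by
    intro x hx
    obtain ⟨i, hi⟩ := hcov (u x) (un x hx)
    exact Classical.epsilon_spec (p := fun i => u x ∈ F i ∨ -u x ∈ F i) ⟨i, Or.inl hi⟩
  let lab : X → ℕ := fun x => 2 * (ix x : ℕ) + if u x ∈ F (ix x) then 1 else 0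
  have lab2 : ∀ x, lab x / 2 = ix x := by
    intro x
    simp only [lab]
    split_ifs <;> omega
  have hKne : ∀ x ∈ K e m, x ≠ 0 := fun x hx => K_ne e he m hx
  have hε : ∀ i, ∃ ε : ℝ, 0 < ε ∧ ∀ x ∈ K e m, ∀ y ∈ K e m, u x ∈ F i → -u y ∈ F i →
      ε ≤ ‖x - y‖ := by
    intro i
    have ucont : ContinuousOn u (K e m) := by
      refine ContinuousOn.smul (ContinuousOn.inv₀ (by fun_prop) ?_) (by fun_prop)
      intro x hx
      exact norm_ne_zero_iff.2 (hKne x hx)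
    have q1 : IsCompact (K e m ∩ u ⁻¹' F i) := by
      have := ucont.preimage_isClosed_of_isClosed (K_compact e m).isClosed (hF i)
      exact (K_compact e m).of_isClosed_subset this Set.inter_subset_left
    have q2 : IsCompact (K e m ∩ (fun x => -u x) ⁻¹' F i) := by
      have := ucont.neg.preimage_isClosed_of_isClosed (K_compact e m).isClosed (hF i)
      exact (K_compact e m).of_isClosed_subset this Set.inter_subset_left
    obtain ⟨a, ha, hb⟩ := (q1.prod q2).exists_forall_le' (f := fun z : X × X => ‖z.1 - z.2‖)
      (a := 0) (by fun_prop) (by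
        rintro ⟨x, y⟩ ⟨⟨hx, hx'⟩, hy, hy'⟩
        rw [norm_pos_iff, sub_ne_zero]
        intro h
        simp only at h hx hx' hy hy'
        subst h
        exact hno i (u x) (un x (hKne x hx)) hx' hy')
    exact ⟨a, ha, fun x hx y hy hx' hy' => hb (x, y) ⟨⟨hx, hx'⟩, hy, hy'⟩⟩
  choose ε hε0 hεs using hε
  obtain ⟨i0, -, hi0⟩ := Finset.exists_min_image Finset.univ ε Finset.univ_nonempty
  refine tucker e m lab (ε i0) (hε0 i0) ?_ ?_ ?_
  · intro x hx
    have a1 := ixs x (hKne x hx)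
    have a2 := hno (ix x) (u x) (un x (hKne x hx))
    simp only [lab, ixneg, uneg, fl]
    by_cases h : u x ∈ F (ix x)
    · have := a2 h
      simp only [h, this, if_true, if_false]
      split_ifs <;> omega
    · have := a1.resolve_left h
      simp only [h, this, if_true, if_false]
      split_ifs <;> omega
  · intro x hx y hy hxy hl
    have hi : ix x = ix y := by
      rw [lab2, lab2] at hl
      exact Fin.ext hl
    have b1 := hi0 (ix x) (Finset.mem_univ _)
    have b2 := hεs (ix x) x hx y hy
    have b3 := hεs (ix x) y hy x hx
    rw [norm_sub_rev] at b3
    have a1 := ixs x (hKne x hx)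
    have a2 := ixs y (hKne y hy)
    rw [← hi] at a2
    simp only [lab]
    rw [← hi]
    by_cases h : u x ∈ F (ix x) <;> by_cases h' : u y ∈ F (ix x)
    · simp [h, h']
    · linarith [b2 h (a2.resolve_left h')]
    · linarith [b3 h' (a1.resolve_left h)]
    · simp [h, h']
  · intro x hx
    rw [lab2]
    exact (ix x).2

lemma antipode (hNCS : ∀ x y : X, x ≠ y → ‖x‖ = 1 → ‖y‖ = 1 →
      ∀ l : ℝ, 0 < l → l < 1 → ‖l • x + (1 - l) • y‖ < 1) {a b : X} (ha : ‖a‖ ≤ 1)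
    (hb : ‖b‖ ≤ 1) (hab : ‖a - b‖ = 2) : b = -a := by
  by_contra h
  have h0 := norm_sub_le a b
  have ha1 : ‖a‖ = 1 := by linarith
  have hb1 : ‖b‖ = 1 := by linarith
  have := hNCS a (-b) (fun h' => h (by rw [h', neg_neg])) ha1 (by rwa [norm_neg]) (1 / 2)
    (by norm_num) (by norm_num)
  have e : (1 / 2 : ℝ) • a + (1 - 1 / 2 : ℝ) • (-b) = (1 / 2 : ℝ) • (a - b) := by module
  rw [e, norm_smul, hab] at this
  norm_num at this

end normed

end LS

/-- Let `X` be an infinite-dimensional strictly convex real normed space.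
Then for every `m ≥ 1`: if `B(θ,1) ⊆ E ⊆ B̄(θ,1)` and `E` is the union of `m` pairwise
congruent sets `A i`, then either `θ` is in the interior of every `A i`, or of none.
In particular, a ball in `X` cannot be covered by finitely many congruent subsets so
that the centre belongs to the interiors of some of them and not of the others. -/
theorem center_in_all_or_no_interiors_infinite_dim
    {X : Type*} [NormedAddCommGroup X] [NormedSpace ℝ X]
    (hinf : ¬ FiniteDimensional ℝ X)
    (hNCS : ∀ x y : X, x ≠ y → ‖x‖ = 1 → ‖y‖ = 1 →
      ∀ l : ℝ, 0 < l → l < 1 → ‖l • x + (1 - l) • y‖ < 1) :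
    ∀ m : ℕ, 1 ≤ m →
      ∀ (E : Set X), Metric.ball (0 : X) 1 ⊆ E → E ⊆ Metric.closedBall (0 : X) 1 →
      ∀ A : Fin m → Set X, E = ⋃ i, A i →
      (∀ i j, ∃ f : X → X, Function.Surjective f ∧
        (∀ x y : X, ‖f x - f y‖ = ‖x - y‖) ∧ f '' A i = A j) →
      ((∀ i, (0 : X) ∈ interior (A i)) ∨ (∀ i, (0 : X) ∉ interior (A i))) := by
  intro m hm E hE1 hE2 A hEA hcong
  have hsub : ∀ i, closure (A i) ⊆ Metric.closedBall (0 : X) 1 := fun i =>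
    closure_minimal (((Set.subset_iUnion A i).trans hEA.symm.subset).trans hE2)
      Metric.isClosed_closedBall
  obtain ⟨i, x, hx, hx1, hx2⟩ := LS.lusternik hinf m hm (fun i => closure (A i))
    (fun i => isClosed_closure) (by
      intro x hx
      have h1 : x ∈ closure E := by
        apply closure_mono hE1
        rw [closure_ball _ one_ne_zero]
        simp [hx]
      rw [hEA, closure_iUnion_of_finite] at h1
      exact Set.mem_iUnion.1 h1)
  have key : ∀ j, (0 : X) ∈ interior (A i) ↔ (0 : X) ∈ interior (A j) := by
    intro j
    obtain ⟨f, hsurj, hf, hfA⟩ := hcong i j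
    have hiso : Isometry f := Isometry.of_dist_eq (fun a b => by
      rw [dist_eq_norm, dist_eq_norm, hf])
    have him : ∀ y ∈ closure (A i), ‖f y‖ ≤ 1 := by
      intro y hy
      have h1 : f y ∈ closure (f '' A i) :=
        image_closure_subset_closure_image hiso.continuous ⟨y, hy, rfl⟩
      rw [hfA] at h1
      simpa using hsub j h1
    have h2 : ‖x - -x‖ = 2 := by
      rw [sub_neg_eq_add, ← two_smul ℝ x, norm_smul, hx]; norm_num
    have h3 := LS.antipode hNCS (him x hx1) (him (-x) hx2) (by rw [hf, h2])
    have h4 := LS.antipode hNCS (a := f x - f 0) (b := f (-x) - f 0)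
      (by rw [hf]; simp [hx]) (by rw [hf]; simp [hx])
      (by rw [sub_sub_sub_cancel_right, hf, h2])
    have h5 : f 0 = 0 := by
      rw [h3] at h4
      have h6 : (2 : ℝ) • f 0 = 0 := by
        have h8 := sub_eq_zero.2 h4
        have h9 : (2 : ℝ) • f 0 = -(-f x - f 0 - -(f x - f 0)) := by module
        rw [h9, h8, neg_zero]
      exact (smul_eq_zero.1 h6).resolve_left two_ne_zero
    let g : X ≃ₜ X := (IsometryEquiv.mk (Equiv.ofBijective f ⟨hiso.injective, hsurj⟩)
      hiso).toHomeomorph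
    have hg : ∀ y, g y = f y := fun y => rfl
    have h7 : g '' interior (A i) = interior (A j) := by
      rw [g.image_interior, ← hfA]; rfl
    rw [← h7]
    constructor
    · intro h
      exact ⟨0, h, by rw [hg, h5]⟩
    · rintro ⟨y, hy, hy0⟩
      have : y = 0 := hiso.injective (by rw [← hg, hy0, h5])
      rwa [← this]
  by_cases h : (0 : X) ∈ interior (A i)
  · exact Or.inl fun j => (key j).1 h
  · exact Or.inr fun j hj => h ((key j).2 hj)
end

section
/- Let X = ℓ^∞ be the space of bounded real sequences with the supremum norm, let n ≥ 3 be odd, and for i = 1, …, n define A_i = {x ∈ B̄(θ,1) : −1 + 2(i−1)/n ≤ x₁ ≤ −1 + 2i/n}, where x₁ is the first coordinate of x. Then the sets A₁, …, A_n are pairwise congruent, their union equals the closed unit ball B̄(θ,1), θ belongs to the interior of A_{(n+1)/2}, and θ ∉ A_i for every i ≠ (n+1)/2. -/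
theorem linf_norm_le_one_iff (x : lp (fun _ : ℕ => ℝ) ⊤) :
    ‖x‖ ≤ 1 ↔ ∀ k, |(x : ∀ _ : ℕ, ℝ) k| ≤ 1 := by
  constructor
  · intro h k
    exact (lp.norm_apply_le_norm (by simp) x k).trans h
  · intro h
    exact lp.norm_le_of_forall_le zero_le_one h

theorem linf_slab_iff (n i : ℕ) (hn : 3 ≤ n) (t : ℝ) :
    (-1 + 2 * ((i : ℝ) - 1) / n ≤ t ∧ t ≤ -1 + 2 * (i : ℝ) / n) ↔
      (2 * ((i : ℝ) - 1) ≤ (t + 1) * n ∧ (t + 1) * n ≤ 2 * (i : ℝ)) := by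
  have h0 : (0 : ℝ) < n := by
    have : 0 < n := by omega
    exact_mod_cast this
  rw [← div_le_iff₀ h0, ← le_div_iff₀ h0]
  constructor <;> rintro ⟨a, b⟩ <;> constructor <;> linarith

/-- In `ℓ^∞` (bounded real sequences with the sup norm), for odd `n ≥ 3`,
the slabs `A i = {x ∈ B̄(θ,1) : -1 + 2(i-1)/n ≤ x₁ ≤ -1 + 2i/n}`, `i = 1, …, n`, are
pairwise congruent, their union is the closed unit ball, `θ` lies in the interior of
the middle slab `A ((n+1)/2)`, and `θ ∉ A i` for every other `i`. -/
theorem linf_slab_cover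
    (n : ℕ) (hn3 : 3 ≤ n) (hodd : Odd n)
    (A : ℕ → Set (lp (fun _ : ℕ => ℝ) ⊤))
    (hA : ∀ i, A i = {x : lp (fun _ : ℕ => ℝ) ⊤ | ‖x‖ ≤ 1 ∧
      -1 + 2 * ((i : ℝ) - 1) / n ≤ (x : ∀ _ : ℕ, ℝ) 0 ∧
      (x : ∀ _ : ℕ, ℝ) 0 ≤ -1 + 2 * (i : ℝ) / n}) :
    (∀ i j, 1 ≤ i → i ≤ n → 1 ≤ j → j ≤ n →
      ∃ f : lp (fun _ : ℕ => ℝ) ⊤ → lp (fun _ : ℕ => ℝ) ⊤,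
        Function.Surjective f ∧ (∀ x y, ‖f x - f y‖ = ‖x - y‖) ∧ f '' A i = A j) ∧
    (⋃ i ∈ Finset.Icc 1 n, A i) = {x : lp (fun _ : ℕ => ℝ) ⊤ | ‖x‖ ≤ 1} ∧
    (0 : lp (fun _ : ℕ => ℝ) ⊤) ∈ interior (A ((n + 1) / 2)) ∧
    (∀ i, 1 ≤ i → i ≤ n → i ≠ (n + 1) / 2 → (0 : lp (fun _ : ℕ => ℝ) ⊤) ∉ A i) := by
  have h0 : (0 : ℝ) < n := by
    have : 0 < n := by omega
    exact_mod_cast this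
  have hm : ∀ i x, x ∈ A i ↔ (∀ k, |(x : ∀ _ : ℕ, ℝ) k| ≤ 1) ∧
      2 * ((i : ℝ) - 1) ≤ ((x : ∀ _ : ℕ, ℝ) 0 + 1) * n ∧
      ((x : ∀ _ : ℕ, ℝ) 0 + 1) * n ≤ 2 * (i : ℝ) := by
    intro i x
    rw [hA, Set.mem_setOf_eq, linf_slab_iff n i hn3, linf_norm_le_one_iff]
  have key : ∀ i j : ℕ, 1 ≤ j → j ≤ n → ∀ x ∈ A i,
      x + lp.single ⊤ 0 (2 * ((j : ℝ) - i) / n) ∈ A j := by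
    intro i j hj1 hjn x hx
    rw [hm] at hx ⊢
    obtain ⟨h1, h2, h3⟩ := hx
    have hj1' : (1 : ℝ) ≤ j := by exact_mod_cast hj1
    have hjn' : (j : ℝ) ≤ n := by exact_mod_cast hjn
    have e : ((x + lp.single ⊤ 0 (2 * ((j : ℝ) - i) / n) : lp (fun _ : ℕ => ℝ) ⊤) :
        ∀ _ : ℕ, ℝ) 0 = (x : ∀ _ : ℕ, ℝ) 0 + 2 * ((j : ℝ) - i) / n := by
      simp
    have e2 : ((x : ∀ _ : ℕ, ℝ) 0 + 2 * ((j : ℝ) - i) / n + 1) * n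
        = ((x : ∀ _ : ℕ, ℝ) 0 + 1) * n + 2 * ((j : ℝ) - i) := by
      field_simp
      ring
    refine ⟨?_, ?_, ?_⟩
    · intro k
      by_cases hk : k = 0
      · subst hk
        rw [e, abs_le]
        constructor <;> by_contra! hc <;> nlinarith
      · have := h1 k
        simpa [lp.single_apply, hk] using this
    · rw [e, e2]; linarith
    · rw [e, e2]; linarith
  obtain ⟨m, rfl⟩ := hodd
  have hmid : (2 * m + 1 + 1) / 2 = m + 1 := by omega
  rw [hmid]
  refine ⟨?_, ?_, ?_, ?_⟩
  · intro i j hi1 hin hj1 hjn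
    refine ⟨fun x => x + lp.single ⊤ 0 (2 * ((j : ℝ) - i) / (2 * m + 1 : ℕ)), ?_, ?_, ?_⟩
    · intro y
      exact ⟨y - lp.single ⊤ 0 (2 * ((j : ℝ) - i) / (2 * m + 1 : ℕ)), sub_add_cancel _ _⟩
    · intro x y
      simp
    · apply Set.Subset.antisymm
      · rintro _ ⟨x, hx, rfl⟩
        exact key i j hj1 hjn x hx
      · intro y hy
        refine ⟨_, key j i hi1 hin y hy, ?_⟩
        have : (2 * ((i : ℝ) - j) / (2 * m + 1 : ℕ)) = -(2 * ((j : ℝ) - i) / (2 * m + 1 : ℕ)) := by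
          ring
        rw [this, lp.single_neg]
        simp
  · ext x
    simp only [Set.mem_iUnion, Finset.mem_Icc, Set.mem_setOf_eq, exists_prop]
    rw [linf_norm_le_one_iff]
    constructor
    · rintro ⟨i, -, hx⟩
      exact ((hm i x).1 hx).1
    · intro hx
      obtain ⟨ha, hb⟩ := abs_le.1 (hx 0)
      set s : ℝ := ((x : ∀ _ : ℕ, ℝ) 0 + 1) * (2 * m + 1 : ℕ) with hs
      have hs0 : 0 ≤ s := mul_nonneg (by linarith) h0.le
      have hs2 : s ≤ 2 * (2 * m + 1 : ℕ) := mul_le_mul_of_nonneg_right (by linarith) h0.le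
      rcases hs0.eq_or_lt with h | h
      · refine ⟨1, ⟨le_rfl, by omega⟩, (hm _ _).2 ⟨hx, ?_, ?_⟩⟩ <;> rw [← hs, ← h] <;> simp
      · refine ⟨⌈s / 2⌉₊, ⟨Nat.ceil_pos.2 (by linarith), Nat.ceil_le.2 (by linarith)⟩,
          (hm _ _).2 ⟨hx, ?_, ?_⟩⟩
        · have := Nat.ceil_lt_add_one (show 0 ≤ s / 2 by linarith)
          linarith
        · have := Nat.le_ceil (s / 2)
          linarith
  · rw [mem_interior_iff_mem_nhds, Metric.mem_nhds_iff]
    refine ⟨1 / (2 * m + 1 : ℕ), by positivity, ?_⟩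
    intro x hx
    rw [mem_ball_zero_iff] at hx
    have h1 : (1 : ℝ) / (2 * m + 1 : ℕ) ≤ 1 := by
      rw [div_le_one h0]
      exact_mod_cast (by omega : 1 ≤ 2 * m + 1)
    have hc := (lp.norm_apply_le_norm (by simp) x 0).trans hx.le
    rw [Real.norm_eq_abs, le_div_iff₀ h0] at hc
    have hc1 := mul_le_mul_of_nonneg_right (neg_abs_le ((x : ∀ _ : ℕ, ℝ) 0)) h0.le
    have hc2 := mul_le_mul_of_nonneg_right (le_abs_self ((x : ∀ _ : ℕ, ℝ) 0)) h0.le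
    refine (hm _ _).2 ⟨(linf_norm_le_one_iff x).1 (hx.le.trans h1), ?_, ?_⟩
    · push_cast at *
      linarith
    · push_cast at *
      linarith
  · intro i hi1 hin hne h
    obtain ⟨-, h2, h3⟩ := (hm _ _).1 h
    simp only [lp.coeFn_zero, Pi.zero_apply, zero_add, one_mul] at h2 h3
    apply hne
    have h2' : 2 * ((i : ℤ) - 1) ≤ ((2 * m + 1 : ℕ) : ℤ) := by exact_mod_cast h2
    have h3' : (2 * m + 1 : ℕ) ≤ 2 * i := by exact_mod_cast h3
    omega
end

section
/- Let X be a nontrivial real normed space. Set A_θ = B̄(θ, 1/2) and, for each y ∈ X with ‖y‖ = 1/2, set A_y = B̄(y, 1/2). Then: (i) the closed unit ball B̄(θ,1) equals the union of A_θ and all the A_y; (ii) any two sets of this family are congruent; (iii) θ belongs to the interior of A_θ; and (iv) for every y with ‖y‖ = 1/2, θ does not belong to the interior of A_y. -/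
/-- In a nontrivial real normed space `X`, with `A_θ = B̄(θ, 1/2)` and
`A_y = B̄(y, 1/2)` for each `y` with `‖y‖ = 1/2`: (i) the closed unit ball is the union
of `A_θ` and all the `A_y`; (ii) any two sets of this family are congruent; (iii) `θ`
is in the interior of `A_θ`; (iv) `θ` is in the interior of no `A_y`. -/
theorem universal_ball_cover
    {X : Type*} [NormedAddCommGroup X] [NormedSpace ℝ X] [Nontrivial X] :
    (Metric.closedBall (0 : X) 1 =
      Metric.closedBall (0 : X) (1/2) ∪
        (⋃ y ∈ {y : X | ‖y‖ = 1/2}, Metric.closedBall y (1/2))) ∧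
    (∀ c c' : X, (c = 0 ∨ ‖c‖ = 1/2) → (c' = 0 ∨ ‖c'‖ = 1/2) →
      ∃ f : X → X, Function.Surjective f ∧ (∀ x y : X, ‖f x - f y‖ = ‖x - y‖) ∧
        f '' Metric.closedBall c (1/2) = Metric.closedBall c' (1/2)) ∧
    (0 : X) ∈ interior (Metric.closedBall (0 : X) (1/2)) ∧
    (∀ y : X, ‖y‖ = 1/2 → (0 : X) ∉ interior (Metric.closedBall y (1/2))) := by
  refine ⟨?_, ?_, ?_, ?_⟩
  · ext x
    simp only [Set.mem_union, Set.mem_iUnion, Set.mem_ofPred_eq, sub_zero,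
      mem_closedBall_iff_norm, exists_prop]
    constructor
    · intro hx
      by_cases h : ‖x‖ ≤ 1/2
      · exact Or.inl h
      · right
        have h' : 1/2 < ‖x‖ := not_le.mp h
        have hpos : 0 < ‖x‖ := by linarith
        refine ⟨(1 / (2 * ‖x‖)) • x, ?_, ?_⟩
        · rw [norm_smul, Real.norm_of_nonneg (by positivity)]
          field_simp
        · have e : x - (1 / (2 * ‖x‖)) • x = (1 - 1 / (2 * ‖x‖)) • x := by
            rw [sub_smul, one_smul]
          have hn : 0 ≤ 1 - 1 / (2 * ‖x‖) := by
            rw [sub_nonneg, div_le_one (by positivity)]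
            linarith
          have e2 : (1 - 1 / (2 * ‖x‖)) * ‖x‖ = ‖x‖ - 1/2 := by
            field_simp
          rw [e, norm_smul, Real.norm_of_nonneg hn, e2]
          linarith
    · rintro (h | ⟨y, hy, h⟩)
      · linarith
      · have := norm_add_le (x - y) y
        rw [sub_add_cancel] at this
        linarith
  · intro c c' _ _
    refine ⟨fun x => x + (c' - c), fun z => ⟨z - (c' - c), by simp⟩, fun x y => by simp, ?_⟩
    ext z
    simp only [Set.mem_image, mem_closedBall_iff_norm]
    constructor
    · rintro ⟨x, hx, rfl⟩
      have e : x + (c' - c) - c' = x - c := by abel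
      rwa [e]
    · intro hz
      refine ⟨z - (c' - c), ?_, by abel⟩
      have e : z - (c' - c) - c = z - c' := by abel
      rwa [e]
  · rw [interior_closedBall _ (by norm_num)]
    exact Metric.mem_ball_self (by norm_num)
  · intro y hy
    rw [interior_closedBall _ (by norm_num), mem_ball_iff_norm, zero_sub, norm_neg, hy]
    exact lt_irrefl _
end

section
/- There exists a countable family (A_i)_{i ∈ ℕ} of subsets of the closed unit ball B̄(θ,1) of ℓ² such that: each A_i is convex; the sets are pairwise congruent; their union equals B̄(θ,1); θ belongs to the interior of A₀; and θ does not belong to the interior of A_i for any i ≥ 1. -/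
/-- The basic piece seen from the centre `-u`. -/
def pieceSet (u : lp (fun _ : ℕ => ℝ) 2) : Set (lp (fun _ : ℕ => ℝ) 2) :=
  {y | ‖y‖ ≤ 1 ∧ ‖y + u‖ ≤ 1 ∧ inner ℝ u y ≤ 0}

theorem separable_l2 : TopologicalSpace.SeparableSpace (lp (fun _ : ℕ => ℝ) 2) := by
  let b : HilbertBasis ℕ ℝ (lp (fun _ : ℕ => ℝ) 2) := ⟨LinearIsometryEquiv.refl ℝ _⟩
  have h1 : TopologicalSpace.IsSeparable (Set.range b) :=
    (Set.countable_range b).isSeparable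
  have h2 := (h1.span (R := ℝ)).closure
  have h3 := b.dense_span
  rw [← TopologicalSpace.isSeparable_univ_iff]
  convert h2
  rw [← Submodule.topologicalClosure_coe, h3]
  rfl

theorem convex_piece (u : lp (fun _ : ℕ => ℝ) 2) : Convex ℝ (pieceSet u) := by
  have h1 : Convex ℝ (Metric.closedBall (0 : lp (fun _ : ℕ => ℝ) 2) 1) := convex_closedBall _ _
  have h2 : Convex ℝ (Metric.closedBall (-u) 1) := convex_closedBall _ _
  have h3 : Convex ℝ {y | (innerSL ℝ u) y ≤ 0} :=
    convex_halfSpace_le (innerSL ℝ u).toLinearMap.isLinear 0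
  convert h1.inter (h2.inter h3) using 1
  ext y
  simp [pieceSet, dist_eq_norm]

theorem piece_refl (u w : lp (fun _ : ℕ => ℝ) 2) (h : ‖u‖ = ‖w‖) :
    ∃ g : lp (fun _ : ℕ => ℝ) 2 ≃ᵢ lp (fun _ : ℕ => ℝ) 2, g '' pieceSet u = pieceSet w := by
  let R := (Submodule.span ℝ {u - w})ᗮ.reflection
  have hR : R u = w := Submodule.reflection_sub h
  refine ⟨R.toIsometryEquiv, ?_⟩
  have key : ∀ y, R y ∈ pieceSet w ↔ y ∈ pieceSet u := by
    intro y
    simp only [pieceSet, Set.mem_setOf_eq]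
    rw [← hR, ← map_add, R.norm_map, R.norm_map, R.inner_map_map]
  ext z
  constructor
  · rintro ⟨y, hy, rfl⟩
    exact (key y).2 hy
  · intro hz
    obtain ⟨y, rfl⟩ := R.surjective z
    exact ⟨y, (key y).1 hz, rfl⟩

theorem piece_cover (y : lp (fun _ : ℕ => ℝ) 2) (hy : ‖y‖ ≤ 1)
    (d : ℕ → Metric.sphere (0 : lp (fun _ : ℕ => ℝ) 2) (1/2)) (hd : DenseRange d) :
    ∃ i, y ∈ pieceSet (d i) := by
  have hn : ∀ i, ‖(d i : lp (fun _ : ℕ => ℝ) 2)‖ = 1/2 := fun i => by simpa using (d i).2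
  by_cases h0 : y = 0
  · subst h0
    refine ⟨0, by simp, ?_, by simp⟩
    rw [zero_add, hn]; norm_num
  have hp : 0 < ‖y‖ := norm_pos_iff.2 h0
  let c : ℝ := -(1 / (2 * ‖y‖))
  have hc : ‖c • y‖ = 1/2 := by
    rw [norm_smul, Real.norm_eq_abs, abs_neg, abs_of_pos (by positivity)]
    field_simp
  let p : Metric.sphere (0 : lp (fun _ : ℕ => ℝ) 2) (1/2) := ⟨c • y, by simpa using hc⟩
  let U : Set (Metric.sphere (0 : lp (fun _ : ℕ => ℝ) 2) (1/2)) :=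
    {u | ‖y + (u : lp (fun _ : ℕ => ℝ) 2)‖ < 1} ∩ {u | inner ℝ (u : lp (fun _ : ℕ => ℝ) 2) y < 0}
  have hU : IsOpen U :=
    (isOpen_lt (by fun_prop) continuous_const).inter (isOpen_lt (by fun_prop) continuous_const)
  have hpU : p ∈ U := by
    constructor
    · change ‖y + c • y‖ < 1
      have : y + c • y = (1 + c) • y := by rw [add_smul, one_smul]
      rw [this, norm_smul, Real.norm_eq_abs]
      have h2 : |1 + c| * ‖y‖ = |‖y‖ - 1/2| := by
        nth_rewrite 1 [← abs_of_pos hp]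
        rw [← abs_mul]
        congr 1
        simp only [c]
        field_simp
        ring
      rw [h2, abs_lt]
      constructor <;> linarith
    · change inner ℝ (c • y) y < 0
      rw [real_inner_smul_left, real_inner_self_eq_norm_sq]
      have : c < 0 := by simp only [c]; rw [neg_lt_zero]; positivity
      exact mul_neg_of_neg_of_pos this (by positivity)
  obtain ⟨i, hi⟩ := hd.exists_mem_open hU ⟨p, hpU⟩
  exact ⟨i, hy, hi.1.le, le_of_lt hi.2⟩

theorem piece_not_interior (u : lp (fun _ : ℕ => ℝ) 2) (hu : u ≠ 0) :
    (0 : lp (fun _ : ℕ => ℝ) 2) ∉ interior (pieceSet u) := by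
  intro h
  rw [mem_interior_iff_mem_nhds] at h
  have ht : Filter.Tendsto (fun t : ℝ => t • u) (nhdsWithin 0 (Set.Ioi 0)) (nhds 0) := by
    have : Continuous (fun t : ℝ => t • u) := by fun_prop
    have h := this.tendsto 0
    rw [zero_smul] at h
    exact h.mono_left nhdsWithin_le_nhds
  have h2 := (ht.eventually h).and self_mem_nhdsWithin
  obtain ⟨t, ht1, ht2⟩ := h2.exists
  have h3 := ht1.2.2
  rw [real_inner_smul_right, real_inner_self_eq_norm_sq] at h3
  have : 0 < ‖u‖ := norm_pos_iff.2 hu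
  have h4 : (0:ℝ) < t := ht2
  have : 0 < t * ‖u‖^2 := by positivity
  linarith

/-- There is a countable family `(A i)_{i ∈ ℕ}` of subsets of the closed
unit ball of `ℓ²` such that each `A i` is convex, the sets are pairwise congruent,
their union is the closed unit ball, `θ ∈ interior (A 0)`, and `θ ∉ interior (A i)`
for every `i ≥ 1`. -/
theorem hilbert_countable_congruent_cover :
    ∃ A : ℕ → Set (lp (fun _ : ℕ => ℝ) 2),
      (∀ i, A i ⊆ Metric.closedBall (0 : lp (fun _ : ℕ => ℝ) 2) 1) ∧
      (∀ i, Convex ℝ (A i)) ∧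
      (∀ i j, ∃ f : lp (fun _ : ℕ => ℝ) 2 → lp (fun _ : ℕ => ℝ) 2,
        Function.Surjective f ∧ (∀ x y, ‖f x - f y‖ = ‖x - y‖) ∧ f '' A i = A j) ∧
      (⋃ i, A i) = Metric.closedBall (0 : lp (fun _ : ℕ => ℝ) 2) 1 ∧
      (0 : lp (fun _ : ℕ => ℝ) 2) ∈ interior (A 0) ∧
      (∀ i, 1 ≤ i → (0 : lp (fun _ : ℕ => ℝ) 2) ∉ interior (A i)) := by
  haveI := separable_l2
  haveI : SecondCountableTopology (lp (fun _ : ℕ => ℝ) 2) :=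
    UniformSpace.secondCountable_of_separable _
  haveI : Nontrivial (lp (fun _ : ℕ => ℝ) 2) :=
    ⟨⟨lp.single 2 0 1, 0, fun h => by
      have := congrArg norm h
      rw [lp.norm_single (by norm_num)] at this
      simp at this⟩⟩
  haveI : Nonempty (Metric.sphere (0 : lp (fun _ : ℕ => ℝ) 2) (1/2)) :=
    (NormedSpace.sphere_nonempty.2 (by norm_num)).to_subtype
  let d := TopologicalSpace.denseSeq (Metric.sphere (0 : lp (fun _ : ℕ => ℝ) 2) (1/2))
  have hd : DenseRange d := TopologicalSpace.denseRange_denseSeq _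
  have hn : ∀ i, ‖(d i : lp (fun _ : ℕ => ℝ) 2)‖ = 1/2 := fun i => by simpa using (d i).2
  obtain ⟨v, hv⟩ : ∃ v : lp (fun _ : ℕ => ℝ) 2, v = d 0 := ⟨_, rfl⟩
  have hvn : ‖v‖ = 1/2 := hv ▸ hn 0
  let A : ℕ → Set (lp (fun _ : ℕ => ℝ) 2) := fun i => match i with
    | 0 => IsometryEquiv.addRight v '' pieceSet v
    | (k+1) => pieceSet (d k)
  have hA0 : ∀ x, x ∈ A 0 ↔ ‖x - v‖ ≤ 1 ∧ ‖x‖ ≤ 1 ∧ inner ℝ v (x - v) ≤ 0 := by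
    intro x
    constructor
    · rintro ⟨y, hy, rfl⟩
      simpa [pieceSet] using hy
    · intro h
      exact ⟨x - v, by simpa [pieceSet] using h, by simp⟩
  have hg : ∀ i, ∃ g : lp (fun _ : ℕ => ℝ) 2 ≃ᵢ lp (fun _ : ℕ => ℝ) 2, g '' pieceSet v = A i := by
    rintro (_ | k)
    · exact ⟨_, rfl⟩
    · exact piece_refl _ _ (by rw [hvn, hn])
  have hsub : ∀ i, A i ⊆ Metric.closedBall (0 : lp (fun _ : ℕ => ℝ) 2) 1 := by
    rintro (_ | k) x hx
    · simpa using ((hA0 x).1 hx).2.1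
    · simpa using hx.1
  refine ⟨A, hsub, ?_, ?_, ?_, ?_, ?_⟩
  · rintro (_ | k)
    · have := (convex_piece v).translate v
      convert this using 1
      ext x
      simp [A, add_comm]
    · exact convex_piece _
  · intro i j
    obtain ⟨g, hgi⟩ := hg i
    obtain ⟨k, hk⟩ := hg j
    refine ⟨g.symm.trans k, (g.symm.trans k).surjective, fun x y => ?_, ?_⟩
    · rw [← dist_eq_norm, ← dist_eq_norm, IsometryEquiv.dist_eq]
    · rw [← hgi, ← hk, Set.image_image]
      simp
  · apply Set.Subset.antisymm (Set.iUnion_subset hsub)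
    intro y hy
    obtain ⟨i, hi⟩ := piece_cover y (by simpa using hy) d hd
    exact Set.mem_iUnion.2 ⟨i + 1, hi⟩
  · rw [mem_interior]
    refine ⟨Metric.ball 0 (1/2), fun x hx => ?_, Metric.isOpen_ball, by simp⟩
    have hx : ‖x‖ < 1/2 := by simpa using hx
    rw [hA0]
    refine ⟨(norm_sub_le _ _).trans (by linarith), by linarith, ?_⟩
    rw [inner_sub_right, real_inner_self_eq_norm_sq, hvn]
    have := real_inner_le_norm v x
    rw [hvn] at this
    linarith
  · rintro (_ | k) hk
    · omega
    · apply piece_not_interior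
      intro h
      have := hn k
      rw [h, norm_zero] at this
      norm_num at this
end

section
/- Let K = B̄(θ,1) be the closed unit disk in the Euclidean plane ℝ², let n ≥ 2, and let A₁, …, A_n be closed convex subsets of ℝ² such that K = A₁ ∪ … ∪ A_n, the interiors of the A_i are pairwise disjoint, and the parts are pairwise similar: for all i, j there exist a bijection f : ℝ² → ℝ² and α > 0 with ‖f(x) − f(y)‖ = α‖x − y‖ for all x, y and f(A_i) = A_j. Then it is not the case that the centre θ belongs to the interior of exactly one of the sets A₁, …, A_n. -/
/-- Abbreviation for the Euclidean plane. -/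
abbrev Pl := EuclideanSpace ℝ (Fin 2)

/-- Metric version of the set of extreme points: points of `A` that are not the midpoint
of a nondegenerate segment in `A`. -/
def MExt (A : Set Pl) : Set Pl :=
  {p | p ∈ A ∧ ∀ a ∈ A, ∀ b ∈ A, 2 * ‖a - p‖ = ‖a - b‖ → 2 * ‖b - p‖ = ‖a - b‖ → a = p}

lemma MExt_image {A : Set Pl} {f : Pl → Pl} {α : ℝ} (hα : 0 < α)
    (hf : ∀ x y, ‖f x - f y‖ = α * ‖x - y‖) {p : Pl} (hp : p ∈ MExt A) :
    f p ∈ MExt (f '' A) := by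
  refine ⟨⟨p, hp.1, rfl⟩, ?_⟩
  rintro _ ⟨a, ha, rfl⟩ _ ⟨b, hb, rfl⟩ h1 h2
  rw [hf, hf] at h1 h2
  congr 1
  refine hp.2 a ha b hb ?_ ?_
  · apply mul_left_cancel₀ hα.ne'; linarith
  · apply mul_left_cancel₀ hα.ne'; linarith

lemma MExt_of_norm {A : Set Pl} (hA : A ⊆ Metric.closedBall 0 1) {p : Pl} (hp : p ∈ A)
    (h1 : ‖p‖ = 1) : p ∈ MExt A := by
  refine ⟨hp, fun a ha b hb e1 e2 => ?_⟩
  have hm : p = midpoint ℝ a b := by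
    apply eq_midpoint_of_dist_eq_half
    · rw [dist_eq_norm, dist_eq_norm]; linarith
    · rw [dist_eq_norm, dist_eq_norm, norm_sub_rev p b]; linarith
  have ha' : ‖a‖ ≤ 1 := by simpa using hA ha
  have hb' : ‖b‖ ≤ 1 := by simpa using hA hb
  have h2 : a + b = (2 : ℝ) • p := by
    rw [hm, midpoint_eq_smul_add, smul_smul]; norm_num
  have h3 : ‖a + b‖ = 2 := by rw [h2, norm_smul, h1]; norm_num
  have h4 := parallelogram_law_with_norm ℝ a b
  rw [h3] at h4
  have h5 : ‖a - b‖ = 0 := by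
    nlinarith [norm_nonneg a, norm_nonneg b, norm_nonneg (a - b)]
  rw [h5] at e1
  have : ‖a - p‖ = 0 := by linarith
  exact sub_eq_zero.1 (norm_eq_zero.1 this)

lemma interior_image_sim {A : Set Pl} {f : Pl → Pl} {α : ℝ} (hα : 0 < α)
    (hs : Function.Surjective f)
    (hf : ∀ x y, ‖f x - f y‖ = α * ‖x - y‖) {p : Pl} (hp : p ∈ interior A) :
    f p ∈ interior (f '' A) := by
  rw [mem_interior_iff_mem_nhds, Metric.mem_nhds_iff] at hp ⊢
  obtain ⟨r, hr, h⟩ := hp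
  refine ⟨α * r, by positivity, fun y hy => ?_⟩
  obtain ⟨x, rfl⟩ := hs y
  refine ⟨x, h ?_, rfl⟩
  rw [Metric.mem_ball, dist_eq_norm] at hy ⊢
  rw [hf] at hy
  exact lt_of_mul_lt_mul_left hy hα.le

lemma finite_MExt {n : ℕ} (A : Fin n → Set Pl)
    (hclosed : ∀ i, IsClosed (A i))
    (hconvex : ∀ i, Convex ℝ (A i))
    (hcover : Metric.closedBall (0 : Pl) 1 = ⋃ i, A i)
    (hdisj : ∀ i j, i ≠ j → interior (A i) ∩ interior (A j) = ∅)
    (hne : ∀ i, (interior (A i)).Nonempty) (j : Fin n) :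
    {p | p ∈ MExt (A j) ∧ ‖p‖ < 1}.Finite := by
  have hcl : ∀ i, closure (interior (A i)) = A i := fun i => by
    rw [(hconvex i).closure_interior_eq_closure_of_nonempty_interior (hne i),
      (hclosed i).closure_eq]
  have sep : ∀ i, ∃ (g : StrongDual ℝ Pl) (u : ℝ), i ≠ j →
      (∀ a ∈ interior (A j), g a < u) ∧ (∀ a ∈ A j, g a ≤ u) ∧ ∀ b ∈ A i, u ≤ g b := by
    intro i
    by_cases hij : i = j
    · exact ⟨0, 0, fun h => (h hij).elim⟩
    obtain ⟨g, u, h1, h2⟩ := geometric_hahn_banach_open (hconvex j).interior isOpen_interior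
      (hconvex i).interior (Set.disjoint_iff_inter_eq_empty.2 (hdisj j i (Ne.symm hij)))
    refine ⟨g, u, fun _ => ⟨h1, ?_, ?_⟩⟩
    · intro a ha
      rw [← hcl j] at ha
      exact closure_minimal (fun x hx => (h1 x hx).le)
        (isClosed_le g.continuous continuous_const) ha
    · intro a ha
      rw [← hcl i] at ha
      exact closure_minimal (fun x hx => h2 x hx)
        (isClosed_le continuous_const g.continuous) ha
  choose g u hgu using sep
  -- description of `A j`
  have key : ∀ y : Pl, ‖y‖ < 1 → (∀ i, i ≠ j → g i y ≤ u i) → y ∈ A j := by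
    intro y hy h
    obtain ⟨z, hz⟩ := hne j
    have hzK : ‖z‖ ≤ 1 := by
      have : z ∈ Metric.closedBall (0 : Pl) 1 := by
        rw [hcover]; exact Set.mem_iUnion.2 ⟨j, interior_subset hz⟩
      simpa using this
    have hmem : ∀ t ∈ Set.Ioo (0 : ℝ) 1, (1 - t) • y + t • z ∈ A j := by
      intro t ht
      have hb : (1 - t) • y + t • z ∈ Metric.closedBall (0 : Pl) 1 := by
        apply convex_closedBall (0 : Pl) 1 (by simpa using hy.le) (by simpa using hzK)
        · linarith [ht.2]
        · exact ht.1.le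
        · ring
      rw [hcover] at hb
      obtain ⟨i, hi⟩ := Set.mem_iUnion.1 hb
      by_cases hij : i = j
      · rwa [hij] at hi
      exfalso
      have e1 := (hgu i hij).2.2 _ hi
      have e2 := (hgu i hij).1 z hz
      have e3 := h i hij
      simp only [map_add, map_smul, smul_eq_mul] at e1
      nlinarith [ht.1, ht.2, mul_pos ht.1 (sub_pos.2 e2),
        mul_nonneg (sub_nonneg.2 ht.2.le) (sub_nonneg.2 e3)]
    have hlim : Filter.Tendsto (fun t : ℝ => (1 - t) • y + t • z) (nhdsWithin 0 (Set.Ioi 0))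
        (nhds y) := by
      have hc : Continuous (fun t : ℝ => (1 - t) • y + t • z) := by fun_prop
      have := hc.tendsto 0
      simp only [sub_zero, one_smul, zero_smul, add_zero] at this
      exact this.mono_left nhdsWithin_le_nhds
    refine (hclosed j).mem_of_tendsto hlim ?_
    filter_upwards [Ioo_mem_nhdsGT (zero_lt_one : (0 : ℝ) < 1)] with t ht using hmem t ht
  have hinj : Set.InjOn (fun p : Pl => {i : Fin n | i ≠ j ∧ g i p = u i})
      {p | p ∈ MExt (A j) ∧ ‖p‖ < 1} := by
    rintro p ⟨hp, hp1⟩ q ⟨hq, hq1⟩ hpq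
    have hpq' : ∀ i, i ≠ j → g i p = u i → g i q = u i := by
      intro i hi h
      have : i ∈ {i : Fin n | i ≠ j ∧ g i p = u i} := ⟨hi, h⟩
      have h2 : i ∈ {i : Fin n | i ≠ j ∧ g i q = u i} := by
        have hpq2 : {i : Fin n | i ≠ j ∧ g i p = u i} = {i : Fin n | i ≠ j ∧ g i q = u i} := hpq
        rwa [hpq2] at this
      exact h2.2
    have hev : ∀ᶠ t : ℝ in nhds 0, p + t • (q - p) ∈ A j := by
      have c1 : ∀ᶠ t : ℝ in nhds 0, ‖p + t • (q - p)‖ < 1 := by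
        have hc : Continuous (fun t : ℝ => ‖p + t • (q - p)‖) := by fun_prop
        exact hc.continuousAt.eventually_lt continuousAt_const (by simpa using hp1)
      have c2 : ∀ᶠ t : ℝ in nhds 0, ∀ i, i ≠ j → g i (p + t • (q - p)) ≤ u i := by
        rw [Filter.eventually_all]
        intro i
        by_cases hij : i = j
        · exact Filter.Eventually.of_forall fun t h => (h hij).elim
        rcases ((hgu i hij).2.1 p hp.1).eq_or_lt with h | h
        · refine Filter.Eventually.of_forall fun t _ => ?_
          simp [hpq' i hij h, h]
        · have hc : Continuous (fun t : ℝ => g i (p + t • (q - p))) := by fun_prop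
          have := hc.continuousAt.eventually_lt (continuousAt_const (x := (0 : ℝ)) (y := u i))
            (by simpa using h)
          exact this.mono fun t ht _ => ht.le
      filter_upwards [c1, c2] with t h1 h2 using key _ h1 h2
    obtain ⟨r, hr, hball⟩ := Metric.eventually_nhds_iff.1 hev
    have m1 := hball (y := r / 2) (by rw [dist_zero_right, Real.norm_eq_abs, abs_of_pos] <;> linarith)
    have m2 := hball (y := -(r / 2))
      (by rw [dist_zero_right, norm_neg, Real.norm_eq_abs, abs_of_pos] <;> linarith)
    have e : p + (r / 2) • (q - p) - (p + (-(r / 2)) • (q - p))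
        = (2 : ℝ) • ((r / 2) • (q - p)) := by module
    have := hp.2 _ m1 _ m2
      (by rw [e, norm_smul, add_sub_cancel_left]; norm_num)
      (by rw [e, norm_smul, add_sub_cancel_left, neg_smul, norm_neg]; norm_num)
    have h0 : (r / 2) • (q - p) = 0 := by simpa using this
    rcases smul_eq_zero.1 h0 with h | h
    · linarith
    · exact (sub_eq_zero.1 h).symm
  exact Set.Finite.of_finite_image (Set.toFinite _) hinj

lemma sphere_infinite : (Metric.sphere (0 : Pl) 1).Infinite := by
  have hr : 1 < Module.rank ℝ Pl := by
    rw [← Module.finrank_eq_rank, finrank_euclideanSpace_fin]; norm_num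
  apply (isPreconnected_sphere hr 0 1).infinite_of_nontrivial
  refine ⟨EuclideanSpace.single 0 1, by simp, EuclideanSpace.single 1 1, by simp, ?_⟩
  intro h
  have := congrArg (fun v : Pl => v 0) h
  simp at this

/-- The closed unit disk `K` in the Euclidean plane `ℝ²` cannot be
dissected into `n ≥ 2` closed, convex, pairwise similar parts (with pairwise disjoint
interiors) in such a way that the centre lies in the interior of exactly one part. -/
theorem no_convex_similar_dissection_center_in_one
    (n : ℕ) (hn : 2 ≤ n)
    (A : Fin n → Set (EuclideanSpace ℝ (Fin 2)))
    (hclosed : ∀ i, IsClosed (A i))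
    (hconvex : ∀ i, Convex ℝ (A i))
    (hcover : Metric.closedBall (0 : EuclideanSpace ℝ (Fin 2)) 1 = ⋃ i, A i)
    (hdisj : ∀ i j, i ≠ j → interior (A i) ∩ interior (A j) = ∅)
    (hsim : ∀ i j, ∃ (f : EuclideanSpace ℝ (Fin 2) → EuclideanSpace ℝ (Fin 2)) (α : ℝ),
      Function.Bijective f ∧ 0 < α ∧
      (∀ x y, ‖f x - f y‖ = α * ‖x - y‖) ∧ f '' A i = A j) :
    ¬ ∃! i : Fin n, (0 : EuclideanSpace ℝ (Fin 2)) ∈ interior (A i) := by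
  rintro ⟨i₀, h0, -⟩
  have hsub : ∀ i, A i ⊆ Metric.closedBall 0 1 := fun i => by
    rw [hcover]; exact Set.subset_iUnion A i
  have hne : ∀ i, (interior (A i)).Nonempty := by
    intro i
    obtain ⟨f, α, hb, hα, hf, him⟩ := hsim i₀ i
    rw [← him]
    exact ⟨_, interior_image_sim hα hb.2 hf h0⟩
  have hfin := finite_MExt A hclosed hconvex hcover hdisj hne
  obtain ⟨i, hi⟩ : ∃ i, (A i ∩ Metric.sphere 0 1).Infinite := by
    by_contra! hcon
    apply sphere_infinite
    refine (Set.finite_iUnion hcon).subset fun x hx => ?_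
    have : x ∈ ⋃ i, A i := by
      rw [← hcover]; exact Metric.sphere_subset_closedBall hx
    obtain ⟨i, hi⟩ := Set.mem_iUnion.1 this
    exact Set.mem_iUnion.2 ⟨i, hi, hx⟩
  have hinf₀ : (MExt (A i₀)).Infinite := by
    obtain ⟨f, α, hb, hα, hf, him⟩ := hsim i i₀
    refine (hi.image hb.1.injOn).mono ?_
    rintro _ ⟨x, hx, rfl⟩
    rw [← him]
    exact MExt_image hα hf (MExt_of_norm (hsub i) hx.1 (by simpa using hx.2))
  obtain ⟨j, hj⟩ : ∃ j, i₀ ≠ j := by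
    have : Nontrivial (Fin n) := Fin.nontrivial_iff_two_le.2 hn
    obtain ⟨j, hj⟩ := exists_ne i₀
    exact ⟨j, hj.symm⟩
  obtain ⟨f, α, hb, hα, hf, him⟩ := hsim i₀ j
  have hlt : ∀ k x, x ∈ MExt (A k) → ‖x‖ < 1 ∨ ‖x‖ = 1 := by
    intro k x hx
    have : ‖x‖ ≤ 1 := by simpa using hsub k hx.1
    exact this.lt_or_eq
  have hT : {p | ‖p‖ = 1 ∧ ‖f p‖ = 1}.Infinite := by
    have h2 : (f ⁻¹' {p | p ∈ MExt (A j) ∧ ‖p‖ < 1}).Finite :=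
      (hfin j).preimage hb.1.injOn
    refine (hinf₀.sdiff ((hfin i₀).union h2)).mono ?_
    rintro p ⟨hp, hn'⟩
    have hfp : f p ∈ MExt (A j) := by rw [← him]; exact MExt_image hα hf hp
    refine ⟨?_, ?_⟩
    · exact (hlt _ _ hp).resolve_left fun h => hn' (Or.inl ⟨hp, h⟩)
    · exact (hlt _ _ hfp).resolve_left fun h => hn' (Or.inr ⟨hfp, h⟩)
  have hf0 : f 0 = 0 := by
    by_contra hc
    obtain ⟨p, hp⟩ := hT.nonempty
    obtain ⟨q, hq, hqp⟩ := hT.exists_notMem_finite (Set.finite_singleton p)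
    obtain ⟨s, hs, hsp⟩ := hT.exists_notMem_finite (Set.toFinite {p, q})
    have d1 : ∀ x, ‖x‖ = 1 ∧ ‖f x‖ = 1 → dist (f x) (f 0) = α := by
      intro x hx
      rw [dist_eq_norm, hf, sub_zero, hx.1, mul_one]
    have d2 : ∀ x, ‖x‖ = 1 ∧ ‖f x‖ = 1 → dist (f x) 0 = 1 := by
      intro x hx
      rw [dist_zero_right, hx.2]
    have hpq : f p ≠ f q := fun h => hqp (hb.1 h).symm
    rcases EuclideanGeometry.eq_of_dist_eq_of_dist_eq_of_finrank_eq_two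
      (by simp) hc hpq (d1 p hp) (d1 q hq) (d1 s hs)
      (d2 p hp) (d2 q hq) (d2 s hs) with h | h
    · exact hsp (Or.inl (hb.1 h))
    · exact hsp (Or.inr (hb.1 h))
  have hmem : (0 : EuclideanSpace ℝ (Fin 2)) ∈ interior (A j) := by
    have := interior_image_sim hα hb.2 hf h0
    rwa [hf0, him] at this
  have : (0 : EuclideanSpace ℝ (Fin 2)) ∈ interior (A i₀) ∩ interior (A j) := ⟨h0, hmem⟩
  rw [hdisj i₀ j hj] at this
  exact this
end
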